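/- arXiv:2006.16685 — 6 statements merged into one kernel-verified Lean document; each statement's English description precedes it below -/
import Mathlib

section
/- Let f : ℝ → ℝ be continuous on [0,1]. Then for every u ∈ [0,1], ∫₀ᵘ ( x / √(u² − x²) ) · ( ∫₀ˣ f(v)/√(x² − v²) dv ) dx = (π/2) · ∫₀ᵘ f(v) dv. -/
open Real intervalIntegral

/-!
The substitution `t = x²` turns `∫_v^u x / (√(u² - x²) √(x² - v²)) dx` into half the total mass `π`
of the arcsine density on `(v², u²)`, so it equals `π / 2` whatever `v < u` is. The double integral
is one over the triangle `0 < v < x ≤ u`; by Fubini the `x`-integral can be done first, which leaves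
`(π / 2) ∫₀ᵘ f`. Tonelli applied to `‖f‖` gives the integrability that Fubini requires.
Both sides change sign when `f` and `u` are reflected through `0`, which covers `u < 0`.
-/

section AbelTransform

open MeasureTheory Set

/-- The kernel `x / (√(u² - x²) √(x² - v²))` that arises on composing the two Abel-type integral
operators. It is meant for `v < x < u`; for `0 ≤ x ≤ v` it vanishes, because `√` is zero on
negative numbers and `x / 0 = 0`, so integrals over the triangle `v < x` can be written over a
square. -/
noncomputable def abelKernel (u v x : ℝ) : ℝ := x / (√(u ^ 2 - x ^ 2) * √(x ^ 2 - v ^ 2))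

theorem measurable_abelKernel (u : ℝ) : Measurable fun p : ℝ × ℝ => abelKernel u p.2 p.1 := by
  unfold abelKernel
  fun_prop

theorem abelKernel_nonneg {u v x : ℝ} (hx : 0 ≤ x) : 0 ≤ abelKernel u v x := by
  unfold abelKernel
  positivity

theorem abelKernel_eq_zero {u v x : ℝ} (hx : 0 ≤ x) (hxv : x ≤ v) : abelKernel u v x = 0 := by
  have hsq : x ^ 2 - v ^ 2 ≤ 0 := sub_nonpos.2 (pow_le_pow_left₀ hx hxv 2)
  rw [abelKernel, sqrt_eq_zero_of_nonpos hsq, mul_zero, div_zero]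

theorem abelKernel_eq_zero_of_mem_sdiff {u v x : ℝ} (hx : x ∈ Ioc 0 u \ Ioc v u) :
    abelKernel u v x = 0 :=
  abelKernel_eq_zero hx.1.1.le (not_lt.1 fun hvx => hx.2 ⟨hvx, hx.1.2⟩)

theorem sqrt_one_sub_sq_arcsine {a b t : ℝ} (ht : t ∈ Ioo a b) :
    √(1 - ((2 * t - a - b) / (b - a)) ^ 2) = 2 * (√(b - t) * √(t - a)) / (b - a) := by
  have hta : 0 < t - a := sub_pos.2 ht.1
  have hbt : 0 < b - t := sub_pos.2 ht.2
  have hab : 0 < b - a := sub_pos.2 (ht.1.trans ht.2)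
  rw [sqrt_eq_iff_mul_self_eq_of_pos (by positivity), ← sq, div_pow, mul_pow, mul_pow,
    sq_sqrt hbt.le, sq_sqrt hta.le]
  field_simp
  ring

theorem hasDerivAt_arcsin_affine {a b t : ℝ} (ht : t ∈ Ioo a b) :
    HasDerivAt (fun s => arcsin ((2 * s - a - b) / (b - a))) (1 / (√(b - t) * √(t - a))) t := by
  have hta : 0 < √(t - a) := sqrt_pos.2 (sub_pos.2 ht.1)
  have hbt : 0 < √(b - t) := sqrt_pos.2 (sub_pos.2 ht.2)
  have hab : 0 < b - a := sub_pos.2 (ht.1.trans ht.2)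
  have h_ne_neg_one : (2 * t - a - b) / (b - a) ≠ -1 := by
    rw [Ne, div_eq_iff hab.ne']
    linarith [ht.1]
  have h_ne_one : (2 * t - a - b) / (b - a) ≠ 1 := by
    rw [Ne, div_eq_iff hab.ne']
    linarith [ht.2]
  have h_affine : HasDerivAt (fun s => (2 * s - a - b) / (b - a)) (2 / (b - a)) t := by
    simpa only [mul_one, id] using
      ((((hasDerivAt_id t).const_mul 2).sub_const a).sub_const b).div_const (b - a)
  refine ((hasDerivAt_arcsin h_ne_neg_one h_ne_one).comp t h_affine).congr_deriv ?_
  rw [sqrt_one_sub_sq_arcsine ht]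
  field_simp

/-- An antiderivative of `abelKernel u v` on `(v, u)`: the arcsine distribution function of the
interval `(v², u²)`, up to an affine change, evaluated at `x²`. -/
noncomputable def abelKernelPrimitive (u v x : ℝ) : ℝ :=
  arcsin ((2 * x ^ 2 - v ^ 2 - u ^ 2) / (u ^ 2 - v ^ 2)) / 2

theorem continuous_abelKernelPrimitive (u v : ℝ) : Continuous (abelKernelPrimitive u v) := by
  unfold abelKernelPrimitive
  fun_prop

theorem hasDerivAt_abelKernelPrimitive {u v x : ℝ} (hx : x ^ 2 ∈ Ioo (v ^ 2) (u ^ 2)) :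
    HasDerivAt (abelKernelPrimitive u v) (abelKernel u v x) x := by
  have h_arcsin := (hasDerivAt_arcsin_affine hx).comp_of_eq x (hasDerivAt_pow 2 x) rfl
  refine (h_arcsin.div_const 2).congr_deriv ?_
  rw [abelKernel]
  push_cast
  ring

theorem hasDerivAt_abelKernelPrimitive_of_mem_Ioo {u v x : ℝ} (hv : 0 ≤ v) (hx : x ∈ Ioo v u) :
    HasDerivAt (abelKernelPrimitive u v) (abelKernel u v x) x :=
  hasDerivAt_abelKernelPrimitive
    ⟨pow_lt_pow_left₀ hx.1 hv two_ne_zero, pow_lt_pow_left₀ hx.2 (hv.trans hx.1.le) two_ne_zero⟩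

theorem abelKernelPrimitive_sub {u v : ℝ} (h : v ^ 2 ≠ u ^ 2) :
    abelKernelPrimitive u v u - abelKernelPrimitive u v v = π / 2 := by
  have h_ne : u ^ 2 - v ^ 2 ≠ 0 := sub_ne_zero.2 h.symm
  have h_right : (2 * u ^ 2 - v ^ 2 - u ^ 2) / (u ^ 2 - v ^ 2) = 1 := by
    rw [div_eq_one_iff_eq h_ne]
    ring
  have h_left : (2 * v ^ 2 - v ^ 2 - u ^ 2) / (u ^ 2 - v ^ 2) = -1 := by
    rw [div_eq_iff h_ne]
    ring
  rw [abelKernelPrimitive, abelKernelPrimitive, h_right, h_left, arcsin_one, arcsin_neg_one]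
  ring

theorem intervalIntegrable_abelKernel {u v : ℝ} (hv : 0 ≤ v) (hvu : v < u) :
    IntervalIntegrable (abelKernel u v) volume v u := by
  refine intervalIntegrable_deriv_of_nonneg (continuous_abelKernelPrimitive u v).continuousOn
    ?_ ?_ <;> rw [min_eq_left hvu.le, max_eq_right hvu.le] <;> intro x hx
  · exact hasDerivAt_abelKernelPrimitive_of_mem_Ioo hv hx
  · exact abelKernel_nonneg (hv.trans hx.1.le)

theorem integral_abelKernel {u v : ℝ} (hv : 0 ≤ v) (hvu : v < u) :
    ∫ x in v..u, abelKernel u v x = π / 2 := by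
  rw [integral_eq_sub_of_hasDerivAt_of_le hvu.le (continuous_abelKernelPrimitive u v).continuousOn
    (fun _ hx => hasDerivAt_abelKernelPrimitive_of_mem_Ioo hv hx)
    (intervalIntegrable_abelKernel hv hvu)]
  exact abelKernelPrimitive_sub (pow_lt_pow_left₀ hvu hv two_ne_zero).ne

theorem integrableOn_abelKernel {u v : ℝ} (hv : 0 ≤ v) (hvu : v < u) :
    IntegrableOn (abelKernel u v) (Ioc 0 u) :=
  ((intervalIntegrable_iff_integrableOn_Ioc_of_le hvu.le).1
    (intervalIntegrable_abelKernel hv hvu)).of_forall_sdiff_eq_zero measurableSet_Ioc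
      fun _ => abelKernel_eq_zero_of_mem_sdiff

theorem setIntegral_abelKernel {u v : ℝ} (hv : 0 ≤ v) (hvu : v < u) :
    ∫ x in Ioc 0 u, abelKernel u v x = π / 2 := by
  rw [← integral_abelKernel hv hvu, integral_of_le hvu.le]
  exact setIntegral_eq_of_subset_of_forall_sdiff_eq_zero measurableSet_Ioc
    (Ioc_subset_Ioc_left hv) fun _ => abelKernel_eq_zero_of_mem_sdiff

variable {E : Type*} [NormedAddCommGroup E] [NormedSpace ℝ E] {f : ℝ → E} {u x : ℝ}

/-- The Abel-type transform `𝒜f(x) = ∫₀ˣ f(v) / √(x² - v²) dv` of a vector-valued function. -/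
noncomputable def abelTransform (f : ℝ → E) (x : ℝ) : E :=
  ∫ v in (0 : ℝ)..x, (√(x ^ 2 - v ^ 2))⁻¹ • f v

theorem integral_zero_neg (g : ℝ → E) (x : ℝ) :
    ∫ v in (0 : ℝ)..-x, g v = -∫ v in (0 : ℝ)..x, g (-v) := by
  rw [integral_comp_neg, neg_zero, integral_symm]

theorem abelTransform_comp_neg (f : ℝ → E) (x : ℝ) :
    abelTransform (fun v => f (-v)) (-x) = -abelTransform f x := by
  simp only [abelTransform, integral_zero_neg _ x, neg_sq, neg_neg]

theorem integral_smul_abelTransform_comp_neg (f : ℝ → E) (u : ℝ) :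
    ∫ x in (0 : ℝ)..-u, (x / √((-u) ^ 2 - x ^ 2)) • abelTransform (fun v => f (-v)) x
      = -∫ x in (0 : ℝ)..u, (x / √(u ^ 2 - x ^ 2)) • abelTransform f x := by
  simp only [integral_zero_neg _ u, neg_sq, neg_div, abelTransform_comp_neg, neg_smul_neg]

theorem smul_abelTransform_eq_setIntegral (f : ℝ → E) (hx : x ∈ Icc 0 u) :
    (x / √(u ^ 2 - x ^ 2)) • abelTransform f x = ∫ v in Ioc 0 u, abelKernel u v x • f v := by
  calc
    _ = ∫ v in Ioc 0 x, abelKernel u v x • f v := by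
      rw [abelTransform, integral_of_le hx.1, ← MeasureTheory.integral_smul]
      simp only [smul_smul, abelKernel, ← div_eq_mul_inv, div_div]
    _ = ∫ v in Ioc 0 u, abelKernel u v x • f v := by
      refine (setIntegral_eq_of_subset_of_forall_sdiff_eq_zero measurableSet_Ioc
        (Ioc_subset_Ioc_right hx.2) fun v hv => ?_).symm
      have hxv : x ≤ v := (not_le.1 fun hvx => hv.2 ⟨hv.1.1, hvx⟩).le
      rw [abelKernel_eq_zero hx.1 hxv, zero_smul]

theorem setIntegral_norm_abelKernel_smul {v : ℝ} (hv : v ∈ Ioo 0 u) (y : E) :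
    ∫ x in Ioc 0 u, ‖abelKernel u v x • y‖ = π / 2 * ‖y‖ := by
  rw [← setIntegral_abelKernel hv.1.le hv.2, ← MeasureTheory.integral_mul_const]
  refine setIntegral_congr_fun measurableSet_Ioc fun x hx => ?_
  simp only [norm_smul, norm_of_nonneg (abelKernel_nonneg hx.1.le)]

theorem integrable_abelKernel_smul (hf : IntegrableOn f (Ioc 0 u)) :
    Integrable (fun p : ℝ × ℝ => abelKernel u p.2 p.1 • f p.2)
      ((volume.restrict (Ioc 0 u)).prod (volume.restrict (Ioc 0 u))) := by
  have h_mem : ∀ᵐ v ∂volume.restrict (Ioc 0 u), v ∈ Ioo 0 u := by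
    rw [← restrict_Ioo_eq_restrict_Ioc]
    exact ae_restrict_mem measurableSet_Ioo
  refine (integrable_prod_iff' ((measurable_abelKernel u).aestronglyMeasurable.smul
    hf.aestronglyMeasurable.comp_snd)).2 ⟨?_, ?_⟩
  · filter_upwards [h_mem] with v hv
    exact (integrableOn_abelKernel hv.1.le hv.2).smul_const (f v)
  · refine (hf.norm.const_mul (π / 2)).congr ?_
    filter_upwards [h_mem] with v hv
    exact (setIntegral_norm_abelKernel_smul hv (f v)).symm

theorem integral_smul_abelTransform_of_nonneg [CompleteSpace E] (hu : 0 ≤ u)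
    (hf : IntegrableOn f (Ioc 0 u)) :
    ∫ x in (0 : ℝ)..u, (x / √(u ^ 2 - x ^ 2)) • abelTransform f x
      = (π / 2) • ∫ v in (0 : ℝ)..u, f v := by
  rw [integral_of_le hu, integral_of_le hu]
  calc
    _ = ∫ x in Ioc 0 u, ∫ v in Ioc 0 u, abelKernel u v x • f v :=
      setIntegral_congr_fun measurableSet_Ioc fun _ hx =>
        smul_abelTransform_eq_setIntegral f (Ioc_subset_Icc_self hx)
    _ = ∫ v in Ioc 0 u, ∫ x in Ioc 0 u, abelKernel u v x • f v :=
      integral_integral_swap (integrable_abelKernel_smul hf)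
    _ = ∫ v in Ioc 0 u, (π / 2) • f v := by
      simp only [← restrict_Ioo_eq_restrict_Ioc (b := u)]
      refine setIntegral_congr_fun measurableSet_Ioo fun v hv => ?_
      simp only [restrict_Ioo_eq_restrict_Ioc, _root_.integral_smul_const,
        setIntegral_abelKernel hv.1.le hv.2]
    _ = (π / 2) • ∫ v in Ioc 0 u, f v := MeasureTheory.integral_smul _ _

theorem abel_transform_left_inverse_integral_general [CompleteSpace E]
    (hf : IntervalIntegrable f volume 0 u) :
    ∫ x in (0 : ℝ)..u, (x / √(u ^ 2 - x ^ 2)) • abelTransform f x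
      = (π / 2) • ∫ v in (0 : ℝ)..u, f v := by
  rcases le_total 0 u with hu | hu
  · exact integral_smul_abelTransform_of_nonneg hu hf.1
  · have hf_neg : IntervalIntegrable (fun v => f (-v)) volume 0 (-u) := by
      simpa only [neg_zero] using (IntervalIntegrable.iff_comp_neg (by simp)).1 hf
    have h_reflect := integral_smul_abelTransform_of_nonneg (neg_nonneg.2 hu) hf_neg.1
    rw [integral_smul_abelTransform_comp_neg, integral_zero_neg, smul_neg, neg_inj] at h_reflect
    simpa only [neg_neg] using h_reflect

end AbelTransform

/-- Composing the Abel-type transform `𝒜f(x) = ∫₀ˣ f(v)/√(x² − v²) dv` with the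
kernel `x/√(u² − x²)` recovers `(π/2) ∫₀ᵘ f`. -/
theorem abel_transform_left_inverse_integral
    (f : ℝ → ℝ) (hf : ContinuousOn f (Set.Icc 0 1)) :
    ∀ u ∈ Set.Icc (0 : ℝ) 1,
      ∫ x in (0:ℝ)..u,
          (x / Real.sqrt (u ^ 2 - x ^ 2)) *
            ∫ v in (0:ℝ)..x, f v / Real.sqrt (x ^ 2 - v ^ 2)
        = (π / 2) * ∫ v in (0:ℝ)..u, f v := by
  intro u hu
  have hfu : IntervalIntegrable f MeasureTheory.volume 0 u :=
    (hf.mono (Set.Icc_subset_Icc_right hu.2)).intervalIntegrable_of_Icc hu.1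
  simpa only [abelTransform, smul_eq_mul, ← div_eq_inv_mul] using
    abel_transform_left_inverse_integral_general hfu
end

section
/- Let P : ℝ → ℝ be continuous on [0,1] and suppose that for every α ∈ (0,1], ∫_{arccos(√α)}^{π/2} P(cos²ϑ) / √(α − cos²ϑ) dϑ = 0. Then P(t) = 0 for every t ∈ [0,1]. -/
open Real intervalIntegral

/-!
Write `α = r ^ 2`. The substitution `cos ϑ = r * sin φ` removes the endpoint singularity and turns
the Leray average into the Schlömilch integral `S g r = ∫ φ in 0..π / 2, g (r * sin φ)` of
`g x = P (x ^ 2) / √(1 - x ^ 2)`. Schlömilch's inversion recovers the primitive of `g` from `S g`: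
averaging `S g (r * sin ψ)` with weight `sin ψ` integrates `g (r * sin ψ * sin φ)` over an octant
of the unit sphere, where by Archimedes' theorem the coordinate `sin ψ * sin φ` is uniformly
distributed on `[0, 1]`. So `S g = 0` forces the primitive of `g`, hence `g`, to vanish.
-/

open scoped Polynomial Interval

/-- Schlömilch's integral of `g` at radius `r`: up to the factor `2 / π`, omitted here, the mean of
`g` over the heights of the points of a quarter circle of radius `r`. -/
noncomputable def schlomilchIntegral (g : ℝ → ℝ) (r : ℝ) : ℝ :=
  ∫ φ in (0 : ℝ)..π / 2, g (r * sin φ)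

lemma mul_sin_mem_Icc {r φ : ℝ} (hr : 0 ≤ r) (hφ : φ ∈ [[0, π / 2]]) :
    r * sin φ ∈ Set.Icc 0 r := by
  rw [Set.uIcc_of_le pi_div_two_pos.le] at hφ
  have hsin : 0 ≤ sin φ := sin_nonneg_of_nonneg_of_le_pi hφ.1 (by linarith [hφ.2, pi_pos])
  exact ⟨mul_nonneg hr hsin, mul_le_of_le_one_right hr (sin_le_one φ)⟩

lemma schlomilchIntegral_congr {f g : ℝ → ℝ} {r : ℝ} (hr : 0 ≤ r)
    (hfg : Set.EqOn f g (Set.Icc 0 r)) : schlomilchIntegral f r = schlomilchIntegral g r :=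
  integral_congr fun _ hφ => hfg (mul_sin_mem_Icc hr hφ)

lemma schlomilchIntegral_add {f g : ℝ → ℝ} (hf : Continuous f) (hg : Continuous g) (r : ℝ) :
    schlomilchIntegral (fun x => f x + g x) r = schlomilchIntegral f r + schlomilchIntegral g r :=
  integral_add (Continuous.intervalIntegrable (by fun_prop) _ _)
    (Continuous.intervalIntegrable (by fun_prop) _ _)

lemma schlomilchIntegral_const_mul_pow (c : ℝ) (n : ℕ) (r : ℝ) :
    schlomilchIntegral (fun x => c * x ^ n) r =
      c * r ^ n * ∫ φ in (0 : ℝ)..π / 2, sin φ ^ n := by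
  simp only [schlomilchIntegral, mul_pow, ← mul_assoc, integral_const_mul]

lemma continuous_schlomilchIntegral {X : Type*} [TopologicalSpace X] [FirstCountableTopology X]
    {g : X → ℝ → ℝ} {r : X → ℝ} (hg : Continuous g.uncurry) (hr : Continuous r) :
    Continuous fun x => schlomilchIntegral (g x) (r x) :=
  have hmap : Continuous fun q : X × ℝ => (q.1, r q.1 * sin q.2) := by fun_prop
  continuous_parametric_intervalIntegral_of_continuous' (f := fun x φ => g x (r x * sin φ))
    (hg.comp hmap) _ _

lemma integral_sin_pow_mul_integral_sin_pow_succ (n : ℕ) :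
    (∫ x in (0 : ℝ)..π / 2, sin x ^ n) * (∫ x in (0 : ℝ)..π / 2, sin x ^ (n + 1)) =
      π / (2 * (n + 1)) := by
  induction n with
  | zero => simp
  | succ k ih =>
    have hrec : ∫ x in (0 : ℝ)..π / 2, sin x ^ (k + 2) =
        (k + 1) / (k + 2) * ∫ x in (0 : ℝ)..π / 2, sin x ^ k := by
      simp [integral_sin_pow]
    calc (∫ x in (0 : ℝ)..π / 2, sin x ^ (k + 1)) * ∫ x in (0 : ℝ)..π / 2, sin x ^ (k + 2)
        = (k + 1) / (k + 2) * ((∫ x in (0 : ℝ)..π / 2, sin x ^ k) *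
            ∫ x in (0 : ℝ)..π / 2, sin x ^ (k + 1)) := by rw [hrec]; ring
      _ = π / (2 * ((k + 1 : ℕ) + 1)) := by
        rw [ih]
        push_cast
        field_simp
        ring

lemma mul_integral_sin_mul_schlomilchIntegral_eval (p : ℝ[X]) (r : ℝ) :
    r * ∫ ψ in (0 : ℝ)..π / 2, sin ψ * schlomilchIntegral p.eval (r * sin ψ) =
      π / 2 * ∫ x in (0 : ℝ)..r, p.eval x := by
  have hcont (q : ℝ[X]) : Continuous fun ψ => sin ψ * schlomilchIntegral q.eval (r * sin ψ) :=
    continuous_sin.mul (continuous_schlomilchIntegral (by fun_prop) (by fun_prop))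
  induction p using Polynomial.induction_on' with
  | add p q hp hq =>
    simp only [Polynomial.eval_add, schlomilchIntegral_add p.continuous q.continuous, mul_add]
    rw [integral_add ((hcont p).intervalIntegrable _ _) ((hcont q).intervalIntegrable _ _),
      integral_add (p.continuous.intervalIntegrable _ _) (q.continuous.intervalIntegrable _ _),
      mul_add, mul_add, hp, hq]
  | monomial n a =>
    have hsin (ψ : ℝ) : sin ψ * schlomilchIntegral (fun x => a * x ^ n) (r * sin ψ) =
        a * r ^ n * (∫ φ in (0 : ℝ)..π / 2, sin φ ^ n) * sin ψ ^ (n + 1) := by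
      rw [schlomilchIntegral_const_mul_pow]
      ring
    simp only [Polynomial.eval_monomial, hsin, integral_const_mul, integral_pow]
    rw [mul_assoc (a * r ^ n), integral_sin_pow_mul_integral_sin_pow_succ]
    field_simp
    ring

/-- `L` and `M` take unbundled functions; extending by constants outside `[a, b]` turns them into
functionals on `C(Set.Icc a b, ℝ)`, where Weierstrass' theorem applies. -/
lemma eq_of_forall_polynomial_eq {Y : Type*} [TopologicalSpace Y] [T2Space Y] {a b : ℝ}
    (hab : a ≤ b) {L M : (ℝ → ℝ) → Y}
    (L_congr : ∀ ⦃f₁ f₂⦄, Set.EqOn f₁ f₂ (Set.Icc a b) → L f₁ = L f₂)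
    (M_congr : ∀ ⦃f₁ f₂⦄, Set.EqOn f₁ f₂ (Set.Icc a b) → M f₁ = M f₂)
    (hL : Continuous fun F : C(Set.Icc a b, ℝ) => L (Set.IccExtend hab F))
    (hM : Continuous fun F : C(Set.Icc a b, ℝ) => M (Set.IccExtend hab F))
    (hLM : ∀ p : ℝ[X], L p.eval = M p.eval) {g : ℝ → ℝ} (hg : ContinuousOn g (Set.Icc a b)) :
    L g = M g := by
  have extend_eqOn {f : ℝ → ℝ} (F : C(Set.Icc a b, ℝ)) (hF : ∀ x, F x = f x) :
      Set.EqOn (Set.IccExtend hab F) f (Set.Icc a b) := fun x hx => by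
    rw [Set.IccExtend_of_mem hab F hx, hF]
  have hext : (fun F : C(Set.Icc a b, ℝ) => L (Set.IccExtend hab F)) =
      fun F : C(Set.Icc a b, ℝ) => M (Set.IccExtend hab F) := by
    refine hL.ext_on (continuousMap_mem_polynomialFunctions_closure a b) hM ?_
    rintro _ ⟨p, -, rfl⟩
    have hp := extend_eqOn (f := p.eval) (p.toContinuousMapOn (Set.Icc a b)) fun _ => rfl
    exact (L_congr hp).trans ((hLM p).trans (M_congr hp).symm)
  let G : C(Set.Icc a b, ℝ) := ⟨(Set.Icc a b).domRestrict g, hg.domRestrict⟩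
  have hG : Set.EqOn (Set.IccExtend hab G) g (Set.Icc a b) := extend_eqOn G fun _ => rfl
  calc L g = L (Set.IccExtend hab G) := (L_congr hG).symm
    _ = M (Set.IccExtend hab G) := congrFun hext G
    _ = M g := M_congr hG

theorem mul_integral_sin_mul_schlomilchIntegral {g : ℝ → ℝ} {r : ℝ} (hr : 0 ≤ r)
    (hg : ContinuousOn g (Set.Icc 0 r)) :
    r * ∫ ψ in (0 : ℝ)..π / 2, sin ψ * schlomilchIntegral g (r * sin ψ) =
      π / 2 * ∫ x in (0 : ℝ)..r, g x := by
  have heval : Continuous fun q : C(Set.Icc 0 r, ℝ) × ℝ => Set.IccExtend hr q.1 q.2 :=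
    continuous_fst.eval (continuous_projIcc.comp continuous_snd)
  refine eq_of_forall_polynomial_eq hr
    (L := fun f => r * ∫ ψ in (0 : ℝ)..π / 2, sin ψ * schlomilchIntegral f (r * sin ψ))
    (M := fun f => π / 2 * ∫ x in (0 : ℝ)..r, f x)
    (fun f₁ f₂ hf => ?_) (fun f₁ f₂ hf => ?_) ?_ ?_
    (fun p => mul_integral_sin_mul_schlomilchIntegral_eval p r) hg
  · refine congrArg (r * ·) (integral_congr fun ψ hψ => congrArg (sin ψ * ·) ?_)
    obtain ⟨hψ₀, hψ₁⟩ := mul_sin_mem_Icc hr hψ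
    exact schlomilchIntegral_congr hψ₀ (hf.mono (Set.Icc_subset_Icc_right hψ₁))
  · exact congrArg (π / 2 * ·) (integral_congr (by rwa [Set.uIcc_of_le hr]))
  · refine continuous_const.mul (continuous_parametric_intervalIntegral_of_continuous' ?_ _ _)
    refine (continuous_sin.comp continuous_snd).mul (continuous_schlomilchIntegral ?_ ?_)
    · exact heval.comp
        (by fun_prop : Continuous fun q : (C(Set.Icc 0 r, ℝ) × ℝ) × ℝ => (q.1.1, q.2))
    · fun_prop
  · exact continuous_const.mul (continuous_parametric_intervalIntegral_of_continuous' heval _ _)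

lemma eqOn_zero_of_forall_integral_eq_zero {E : Type*} [NormedAddCommGroup E] [NormedSpace ℝ E]
    [CompleteSpace E] {g : ℝ → E} {a b : ℝ} (hg : ContinuousOn g (Set.Ico a b))
    (h : ∀ u ∈ Set.Ico a b, ∫ x in a..u, g x = 0) : Set.EqOn g 0 (Set.Ico a b) := by
  intro u hu
  have hint : IntervalIntegrable g MeasureTheory.volume a u :=
    ContinuousOn.intervalIntegrable <| hg.mono <| by
      rw [Set.uIcc_of_le hu.1]
      exact Set.Icc_subset_Ico_right hu.2
  have hsub : Set.Ico u b ⊆ Set.Ico a b := Set.Ico_subset_Ico_left hu.1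
  have hnhds : nhdsWithin u (Set.Ioi u) ≤ nhdsWithin u (Set.Ico a b) := by
    rw [← nhdsWithin_Ioo_eq_nhdsGT hu.2]
    exact nhdsWithin_mono u (Set.Ioo_subset_Ico_self.trans hsub)
  have hderiv : HasDerivWithinAt (fun v => ∫ x in a..v, g x) (g u) (Set.Ici u) u :=
    integral_hasDerivWithinAt_right hint
      ((hg.stronglyMeasurableAtFilter_nhdsWithin measurableSet_Ico u).filter_mono hnhds)
      ((hg u hu).mono_left hnhds)
  have hzero : HasDerivWithinAt (fun v => ∫ x in a..v, g x) 0 (Set.Ici u) u := by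
    refine (hasDerivWithinAt_const u _ (0 : E)).congr_of_eventuallyEq ?_ (h u hu)
    filter_upwards [Ico_mem_nhdsGE hu.2] with v hv using h v (hsub hv)
  exact (uniqueDiffWithinAt_Ici u).eq_deriv _ hderiv hzero

theorem eqOn_zero_of_schlomilchIntegral_eq_zero {g : ℝ → ℝ} {R : ℝ}
    (hg : ContinuousOn g (Set.Ico 0 R)) (h : ∀ r ∈ Set.Ioo 0 R, schlomilchIntegral g r = 0) :
    Set.EqOn g 0 (Set.Ico 0 R) := by
  refine eqOn_zero_of_forall_integral_eq_zero hg fun r hr => ?_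
  have hweighted : ∀ ψ ∈ [[0, π / 2]], r * (sin ψ * schlomilchIntegral g (r * sin ψ)) = 0 := by
    intro ψ hψ
    obtain ⟨hψ₀, hψ₁⟩ := mul_sin_mem_Icc hr.1 hψ
    rcases hψ₀.eq_or_lt with hzero | hpos
    · rw [← mul_assoc, ← hzero, zero_mul]
    · rw [h _ ⟨hpos, hψ₁.trans_lt hr.2⟩, mul_zero, mul_zero]
  have hinv := mul_integral_sin_mul_schlomilchIntegral hr.1
    (hg.mono (Set.Icc_subset_Ico_right hr.2))
  rw [← integral_const_mul, integral_congr hweighted, integral_zero] at hinv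
  exact (mul_eq_zero.mp hinv.symm).resolve_left pi_div_two_pos.ne'

lemma sqrt_sq_sub_mul_sin_sq {r φ : ℝ} (hr : 0 ≤ r) (hφ : 0 ≤ cos φ) :
    √(r ^ 2 - (r * sin φ) ^ 2) = r * cos φ := by
  rw [← sqrt_sq (mul_nonneg hr hφ), mul_pow, mul_pow, cos_sq']
  congr 1
  ring

lemma hasDerivAt_arccos_mul_sin {r φ : ℝ} (h₁ : r * sin φ ≠ -1) (h₂ : r * sin φ ≠ 1) :
    HasDerivAt (fun φ => arccos (r * sin φ)) (-(r * cos φ / √(1 - (r * sin φ) ^ 2))) φ := by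
  refine ((hasDerivAt_arccos h₁ h₂).comp φ ((hasDerivAt_sin φ).const_mul r)).congr_deriv ?_
  ring

lemma integral_div_sqrt_sq_sub_cos_sq (f : ℝ → ℝ) {r : ℝ} (hr : r ∈ Set.Ioc (0 : ℝ) 1) :
    ∫ ϑ in arccos r..π / 2, f (cos ϑ) / √(r ^ 2 - cos ϑ ^ 2) =
      schlomilchIntegral (fun x => f x / √(1 - x ^ 2)) r := by
  have hmem {φ : ℝ} (hφ : φ ∈ Set.Ioo 0 (π / 2)) :
      0 < cos φ ∧ 0 < r * sin φ ∧ r * sin φ < 1 := by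
    have hcos : 0 < cos φ := cos_pos_of_mem_Ioo ⟨by linarith [hφ.1, pi_pos], hφ.2⟩
    have hsin : 0 < sin φ := sin_pos_of_pos_of_lt_pi hφ.1 (by linarith [hφ.2, pi_pos])
    have hsin' : sin φ < 1 := by nlinarith [sin_sq_add_cos_sq φ]
    exact ⟨hcos, mul_pos hr.1 hsin, mul_lt_one_of_nonneg_of_lt_one_right hr.2 hsin.le hsin'⟩
  have hsubst := integral_deriv_smul_comp_of_deriv_nonpos (a := 0) (b := π / 2)
    (f := fun φ => arccos (r * sin φ)) (f' := fun φ => -(r * cos φ / √(1 - (r * sin φ) ^ 2)))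
    (g := fun ϑ => f (cos ϑ) / √(r ^ 2 - cos ϑ ^ 2)) (by fun_prop)
  simp only [min_eq_left pi_div_two_pos.le, max_eq_right pi_div_two_pos.le, sin_zero, mul_zero,
    arccos_zero, sin_pi_div_two, mul_one] at hsubst
  rw [integral_symm, ← hsubst, ← integral_neg, schlomilchIntegral]
  · refine integral_congr_Ioo_of_le pi_div_two_pos.le fun φ hφ => ?_
    obtain ⟨hcos, hpos, hlt⟩ := hmem hφ
    have hsqrt : 0 < √(1 - (r * sin φ) ^ 2) := sqrt_pos.mpr (by nlinarith)
    simp only [Function.comp_apply, smul_eq_mul, cos_arccos (by linarith) hlt.le,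
      sqrt_sq_sub_mul_sin_sq hr.1.le hcos.le]
    field_simp [hr.1.ne', hcos.ne', hsqrt.ne']
  · intro φ hφ
    obtain ⟨-, hpos, hlt⟩ := hmem hφ
    exact hasDerivAt_arccos_mul_sin (by linarith) hlt.ne
  · intro φ hφ
    have := mul_pos hr.1 (hmem hφ).1
    exact neg_nonpos.mpr (by positivity)

theorem inside_separatrix_rigidity_general {P : ℝ → ℝ} {β : ℝ} (hβ : β ≤ 1)
    (hP : ContinuousOn P (Set.Ico 0 β))
    (h : ∀ α ∈ Set.Ioo 0 β,
      ∫ ϑ in arccos √α..π / 2, P (cos ϑ ^ 2) / √(α - cos ϑ ^ 2) = 0) :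
    ∀ t ∈ Set.Ico 0 β, P t = 0 := by
  have sq_mem {y : ℝ} (hy : y ∈ Set.Ico 0 √β) : y ^ 2 ∈ Set.Ico 0 β :=
    ⟨sq_nonneg y, (lt_sqrt hy.1).mp hy.2⟩
  have sqrt_pos_of_lt {t : ℝ} (ht : t < β) : 0 < √(1 - t) := sqrt_pos.mpr (by linarith)
  have hg : Set.EqOn (fun y => P (y ^ 2) / √(1 - y ^ 2)) 0 (Set.Ico 0 √β) := by
    refine eqOn_zero_of_schlomilchIntegral_eq_zero
      ((hP.comp (by fun_prop) fun y hy => sq_mem hy).div (by fun_prop)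
        fun y hy => (sqrt_pos_of_lt (sq_mem hy).2).ne') fun r hr => ?_
    have hr2 : r ^ 2 < β := (sq_mem (Set.Ioo_subset_Ico_self hr)).2
    rw [← integral_div_sqrt_sq_sub_cos_sq (fun x => P (x ^ 2))
      ⟨hr.1, by nlinarith [hr.1]⟩, ← h (r ^ 2) ⟨pow_pos hr.1 2, hr2⟩, sqrt_sq hr.1.le]
  intro t ht
  have hgt := hg ⟨sqrt_nonneg t, sqrt_lt_sqrt ht.1 ht.2⟩
  simp only [sq_sqrt ht.1] at hgt
  exact (div_eq_zero_iff.mp hgt).resolve_right (sqrt_pos_of_lt ht.2).ne'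

/-- Vanishing of the Leray averages over all invariant curves inside the
separatrix forces the symmetric variation to vanish. -/
theorem inside_separatrix_rigidity
    (P : ℝ → ℝ) (hP : ContinuousOn P (Set.Icc 0 1))
    (h : ∀ α ∈ Set.Ioc (0 : ℝ) 1,
      ∫ ϑ in Real.arccos (Real.sqrt α)..(π / 2),
        P (Real.cos ϑ ^ 2) / Real.sqrt (α - Real.cos ϑ ^ 2) = 0) :
    ∀ t ∈ Set.Icc (0 : ℝ) 1, P t = 0 :=
  Set.EqOn.of_subset_closure
    (inside_separatrix_rigidity_general le_rfl (hP.mono Set.Ico_subset_Icc_self)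
      fun α hα => h α (Set.Ioo_subset_Ioc_self hα))
    hP continuousOn_const Set.Ico_subset_Icc_self (closure_Ico zero_ne_one).ge
end

section
/- Let β > 1 and let f : (0,1) → ℝ be Lebesgue integrable. If ∫₀¹ f(u) (β − u)^{−n−1/2} du = 0 for every n ∈ ℕ, then f = 0 almost everywhere on (0,1). -/
open Real MeasureTheory intervalIntegral

/-!
With `F u = f u * (β - u) ^ (-1 / 2 : ℝ)` and `φ u = (β - u)⁻¹`, the hypothesis says that `F` is
orthogonal to every power of the bounded injective function `φ`. Hence the images under `φ` of the
finite measures with densities `F⁺` and `F⁻` have the same moments. Both are carried by a compact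
interval, so they coincide by the Weierstrass approximation theorem. As `φ` is injective, `F⁺ = F⁻`
almost everywhere, that is, `F = 0`.
-/

section Weierstrass

open Filter Polynomial Topology

lemma exists_polynomial_tendstoUniformlyOn {a b : ℝ} {g : ℝ → ℝ}
    (hg : ContinuousOn g (Set.Icc a b)) :
    ∃ p : ℕ → ℝ[X], TendstoUniformlyOn (fun n x => (p n).eval x) g atTop (Set.Icc a b) := by
  choose p hp using fun n : ℕ =>
    exists_polynomial_near_of_continuousOn a b g hg (1 / (n + 1)) Nat.one_div_pos_of_nat
  refine ⟨p, Metric.tendstoUniformlyOn_iff.mpr fun ε hε => ?_⟩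
  filter_upwards [tendsto_one_div_add_atTop_nhds_zero_nat.eventually_lt_const hε] with n hn x hx
  rw [dist_comm]
  exact (hp n x hx).trans hn

lemma tendsto_integral_of_tendstoUniformlyOn {X ι E : Type*} [MeasurableSpace X]
    [NormedAddCommGroup E] [NormedSpace ℝ E] {μ : Measure X} [IsFiniteMeasure μ] {s : Set X}
    (hs : ∀ᵐ x ∂μ, x ∈ s) {l : Filter ι} [l.IsCountablyGenerated] {G : ι → X → E} {g : X → E}
    (hG : ∀ᶠ i in l, AEStronglyMeasurable (G i) μ) (hg : Integrable g μ)
    (h : TendstoUniformlyOn G g l s) :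
    Tendsto (fun i => ∫ x, G i x ∂μ) l (𝓝 (∫ x, g x ∂μ)) := by
  refine MeasureTheory.tendsto_integral_filter_of_dominated_convergence (fun x => ‖g x‖ + 1) hG ?_
    (hg.norm.add (integrable_const 1)) (hs.mono fun x hx => h.tendsto_at hx)
  filter_upwards [Metric.tendstoUniformlyOn_iff.mp h 1 one_pos] with i hi
  filter_upwards [hs] with x hx
  have hdist : ‖g x - G i x‖ ≤ 1 := by simpa only [dist_eq_norm] using (hi x hx).le
  exact (norm_le_norm_add_norm_sub (g x) (G i x)).trans (by gcongr)

end Weierstrass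

section Moments

variable {a b : ℝ} {P Q : Measure ℝ}

lemma integral_polynomial_eval (hP : ∀ n : ℕ, Integrable (fun x => x ^ n) P)
    (p : Polynomial ℝ) :
    ∫ x, p.eval x ∂P = ∑ i ∈ Finset.range (p.natDegree + 1), p.coeff i * ∫ x, x ^ i ∂P := by
  simp_rw [Polynomial.eval_eq_sum_range, ← MeasureTheory.integral_const_mul]
  exact MeasureTheory.integral_finsetSum _ fun n _ => (hP n).const_mul _

variable [IsFiniteMeasure P] [IsFiniteMeasure Q]

lemma integrable_pow_of_ae_mem_Icc (hP : ∀ᵐ x ∂P, x ∈ Set.Icc a b) (n : ℕ) :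
    Integrable (fun x => x ^ n) P := by
  rw [← Measure.restrict_eq_self_of_ae_mem hP]
  exact (continuous_pow n).continuousOn.integrableOn_compact isCompact_Icc

lemma measure_eq_of_forall_integral_pow_eq (hP : ∀ᵐ x ∂P, x ∈ Set.Icc a b)
    (hQ : ∀ᵐ x ∂Q, x ∈ Set.Icc a b) (h : ∀ n : ℕ, ∫ x, x ^ n ∂P = ∫ x, x ^ n ∂Q) : P = Q := by
  refine ext_of_forall_integral_eq_of_IsFiniteMeasure fun g => ?_
  obtain ⟨p, hp⟩ := exists_polynomial_tendstoUniformlyOn (a := a) (b := b) g.continuous.continuousOn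
  have hmeas (μ : Measure ℝ) (n : ℕ) : AEStronglyMeasurable (fun x => (p n).eval x) μ :=
    (p n).continuous.aestronglyMeasurable
  have hlimP := tendsto_integral_of_tendstoUniformlyOn hP (.of_forall (hmeas P)) (g.integrable P) hp
  have hlimQ := tendsto_integral_of_tendstoUniformlyOn hQ (.of_forall (hmeas Q)) (g.integrable Q) hp
  refine tendsto_nhds_unique hlimP (hlimQ.congr fun n => ?_)
  simp only [integral_polynomial_eval (integrable_pow_of_ae_mem_Icc hP),
    integral_polynomial_eval (integrable_pow_of_ae_mem_Icc hQ), h]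

end Moments

section Density

variable {X : Type*} [MeasurableSpace X] {μ : Measure X} {F : X → ℝ}

lemma integral_withDensity_ofReal (hF : AEMeasurable F μ) (g : X → ℝ) :
    ∫ x, g x ∂μ.withDensity (fun x => ENNReal.ofReal (F x)) = ∫ x, max (F x) 0 * g x ∂μ := by
  rw [integral_withDensity_eq_integral_toReal_smul₀ hF.ennreal_ofReal
    (.of_forall fun _ => ENNReal.ofReal_lt_top)]
  simp only [ENNReal.toReal_ofReal', smul_eq_mul]

lemma integral_withDensity_ofReal_sub_neg (hF : Integrable F μ) {g : X → ℝ} {C : ℝ}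
    (hg : AEStronglyMeasurable g μ) (hC : ∀ᵐ x ∂μ, ‖g x‖ ≤ C) :
    ∫ x, g x ∂μ.withDensity (fun x => ENNReal.ofReal (F x)) -
      ∫ x, g x ∂μ.withDensity (fun x => ENNReal.ofReal (-F x)) = ∫ x, F x * g x ∂μ := by
  rw [integral_withDensity_ofReal hF.aemeasurable,
    integral_withDensity_ofReal hF.aemeasurable.fun_neg,
    ← MeasureTheory.integral_sub (hF.pos_part.mul_bdd hg hC) (hF.neg_part.mul_bdd hg hC)]
  simp only [← sub_mul, max_zero_sub_max_neg_zero_eq_self]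

lemma ae_eq_zero_of_withDensity_ofReal_eq (hF : Integrable F μ)
    (h : μ.withDensity (fun x => ENNReal.ofReal (F x)) =
      μ.withDensity (fun x => ENNReal.ofReal (-F x))) :
    F =ᵐ[μ] 0 := by
  filter_upwards [(withDensity_eq_iff hF.aemeasurable.ennreal_ofReal
    hF.aemeasurable.fun_neg.ennreal_ofReal hF.lintegral_lt_top.ne).mp h] with x hx
  have hmax : max (F x) 0 = max (-F x) 0 := by
    simpa only [ENNReal.toReal_ofReal'] using congrArg ENNReal.toReal hx
  rw [← max_zero_sub_max_neg_zero_eq_self (F x), hmax, sub_self, Pi.zero_apply]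

lemma ae_eq_zero_of_forall_integral_mul_pow_eq_zero {φ : X → ℝ} {c d : ℝ} (hF : Integrable F μ)
    (hφ : MeasurableEmbedding φ) (hφ_mem : ∀ᵐ x ∂μ, φ x ∈ Set.Icc c d)
    (h : ∀ n : ℕ, ∫ x, F x * φ x ^ n ∂μ = 0) : F =ᵐ[μ] 0 := by
  have := isFiniteMeasure_withDensity_ofReal hF.2
  have := isFiniteMeasure_withDensity_ofReal hF.neg.2
  have hmem (w : X → ENNReal) : ∀ᵐ y ∂(μ.withDensity w).map φ, y ∈ Set.Icc c d :=
    hφ.ae_map_iff.mpr ((withDensity_absolutelyContinuous μ w).ae_le hφ_mem)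
  have hbound (n : ℕ) : ∀ᵐ x ∂μ, ‖φ x ^ n‖ ≤ max |c| |d| ^ n := by
    filter_upwards [hφ_mem] with x hx
    rw [norm_pow, Real.norm_eq_abs]
    gcongr
    exact abs_le_max_abs_abs hx.1 hx.2
  refine ae_eq_zero_of_withDensity_ofReal_eq hF (hφ.map_injective ?_)
  refine measure_eq_of_forall_integral_pow_eq (hmem _) (hmem _) fun n => ?_
  rw [hφ.integral_map, hφ.integral_map, ← sub_eq_zero, integral_withDensity_ofReal_sub_neg hF
    (hφ.measurable.pow_const n).aestronglyMeasurable (hbound n), h n]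

end Density

theorem moments_vanish_implies_zero_general {a b β : ℝ} (hβ : b < β) (s : ℝ) {μ : Measure ℝ}
    (hμ : ∀ᵐ u ∂μ, u ∈ Set.Icc a b) {f : ℝ → ℝ} (hf : Integrable f μ)
    (h : ∀ n : ℕ, ∫ u, f u * (β - u) ^ (-(n : ℝ) - s) ∂μ = 0) : ∀ᵐ u ∂μ, f u = 0 := by
  have hpos : ∀ u ∈ Set.Icc a b, 0 < β - u := fun u hu => by linarith [hu.2]
  -- Injectivity on all of `ℝ`, including `u = β`, rests on the convention `0⁻¹ = 0`.
  have hφ : MeasurableEmbedding fun u : ℝ => (β - u)⁻¹ :=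
    (measurable_id.const_sub β).inv.measurableEmbedding
      (inv_injective.comp sub_right_injective)
  have hF : Integrable (fun u => f u * (β - u) ^ (-s)) μ := by
    rw [← Measure.restrict_eq_self_of_ae_mem hμ] at hf ⊢
    refine IntegrableOn.mul_continuousOn hf ?_ isCompact_Icc
    exact (continuousOn_const.sub continuousOn_id).rpow_const fun u hu => .inl (hpos u hu).ne'
  have hφ_mem : ∀ᵐ u ∂μ, (β - u)⁻¹ ∈ Set.Icc (β - a)⁻¹ (β - b)⁻¹ := by
    filter_upwards [hμ] with u hu
    exact ⟨inv_anti₀ (hpos u hu) (by linarith [hu.1]), inv_anti₀ (by linarith) (by linarith [hu.2])⟩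
  have hmoment (n : ℕ) : ∫ u, f u * (β - u) ^ (-s) * (β - u)⁻¹ ^ n ∂μ = 0 := by
    rw [← h n]
    refine integral_congr_ae ?_
    filter_upwards [hμ] with u hu
    rw [mul_assoc, inv_pow, ← rpow_natCast, ← rpow_neg (hpos u hu).le, ← rpow_add (hpos u hu),
      neg_add_eq_sub]
  filter_upwards [hμ, ae_eq_zero_of_forall_integral_mul_pow_eq_zero hF hφ hφ_mem hmoment]
    with u hu hFu
  exact (mul_eq_zero.mp hFu).resolve_right (rpow_pos_of_pos (hpos u hu) _).ne'

/-- If all the moments `∫₀¹ f(u)(β − u)^{−n−1/2} du` of an integrable function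
vanish for some `β > 1`, then `f = 0` a.e. on `(0,1)`. -/
theorem moments_vanish_implies_zero
    (β : ℝ) (hβ : 1 < β) (f : ℝ → ℝ) (hf : IntegrableOn f (Set.Ioo 0 1))
    (h : ∀ n : ℕ, ∫ u in (0:ℝ)..1, f u * (β - u) ^ (-(n : ℝ) - 1/2) = 0) :
    ∀ᵐ u ∂(volume.restrict (Set.Ioo (0:ℝ) 1)), f u = 0 := by
  simp only [integral_of_le zero_le_one, integral_Ioc_eq_integral_Ioo] at h
  exact moments_vanish_implies_zero_general hβ (1 / 2)
    ((ae_restrict_mem measurableSet_Ioo).mono fun _ => Set.mem_Icc_of_Ioo) hf h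
end

section
/- Let β > 1 and let P : ℝ → ℝ be continuous on [0,1]. Suppose that for every α ∈ (1, β], ∫₀^{π/2} P(cos²ϑ) / √(α − cos²ϑ) dϑ = 0. Then P(t) = 0 for every t ∈ [0,1]. -/
open Real intervalIntegral

/-!
With `μ` the distribution of `t = cos² ϑ`, the averages are values of the generalized Stieltjes
transform `∫ (α - t) ^ r P(t) dμ(t)` with `r = -1/2`, for `α` to the right of the support of `μ`.
Differentiating `n` times under the integral at a single `α` multiplies the density
`(α - t) ^ r P(t)` by `((α - t)⁻¹) ^ n`, up to the constant `r (r - 1) ⋯ (r - n + 1)`. Since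
`t ↦ (α - t)⁻¹` separates points, the Stone–Weierstrass theorem shows that this density is
orthogonal to all continuous functions, so `P` vanishes `μ`-almost everywhere.
-/

open Filter MeasureTheory Set Topology

theorem dense_span_range_pow {X : Type*} [TopologicalSpace X] [CompactSpace X] {w : C(X, ℝ)}
    (hw : Function.Injective w) :
    Dense (Submodule.span ℝ (range fun n : ℕ => w ^ n) : Set C(X, ℝ)) := by
  have hspan : Submodule.span ℝ (range fun n : ℕ => w ^ n) =
      Subalgebra.toSubmodule (Algebra.adjoin ℝ {w}) := by
    rw [Algebra.adjoin_eq_span, ← Submonoid.powers_eq_closure]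
    rfl
  have hsep : (Algebra.adjoin ℝ {w}).SeparatesPoints := fun x y hxy =>
    ⟨w, ⟨w, Algebra.self_mem_adjoin_singleton ℝ w, rfl⟩, hw.ne hxy⟩
  have hclosure :=
    ContinuousMap.subalgebra_topologicalClosure_eq_top_of_separatesPoints _ hsep
  rw [hspan, dense_iff_closure_eq]
  simpa using congrArg SetLike.coe hclosure

section Moments

variable {X E : Type*} [TopologicalSpace X] [CompactSpace X] [MeasurableSpace X]
  [OpensMeasurableSpace X] [NormedAddCommGroup E] [NormedSpace ℝ E] {μ : Measure X} {k : X → E}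

theorem integrable_continuousMap_smul (hk : Integrable k μ) (φ : C(X, ℝ)) :
    Integrable (fun x => φ x • k x) μ :=
  hk.bdd_smul ‖φ‖ φ.continuous.aestronglyMeasurable (.of_forall φ.norm_coe_le_norm)

/-- Integration against the vector-valued density `k`, as a continuous linear map on `C(X, ℝ)`;
it lets the Stone–Weierstrass theorem be applied to moment problems. -/
noncomputable def integralSMulCLM (hk : Integrable k μ) : C(X, ℝ) →L[ℝ] E :=
  LinearMap.mkContinuous
    { toFun := fun φ => ∫ x, φ x • k x ∂μ
      map_add' := fun φ ψ => by
        simp only [ContinuousMap.add_apply, add_smul]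
        exact integral_add (integrable_continuousMap_smul hk φ)
          (integrable_continuousMap_smul hk ψ)
      map_smul' := fun c φ => by
        simp only [ContinuousMap.smul_apply, smul_assoc, MeasureTheory.integral_smul,
          RingHom.id_apply] }
    (∫ x, ‖k x‖ ∂μ) fun φ => by
      rw [mul_comm, ← MeasureTheory.integral_const_mul]
      refine norm_integral_le_of_norm_le (hk.norm.const_mul _) (.of_forall fun x => ?_)
      rw [norm_smul]
      gcongr
      exact φ.norm_coe_le_norm x

theorem integral_smul_eq_zero_of_moments (hk : Integrable k μ) {w : C(X, ℝ)}
    (hw : Function.Injective w) (hmoments : ∀ n : ℕ, ∫ x, w x ^ n • k x ∂μ = 0) (φ : C(X, ℝ)) :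
    ∫ x, φ x • k x ∂μ = 0 := by
  have hzero : integralSMulCLM hk = 0 :=
    ContinuousLinearMap.ext_on (dense_span_range_pow hw) <| by
      rintro _ ⟨n, rfl⟩
      exact hmoments n
  exact DFunLike.congr_fun hzero φ

end Moments

theorem setIntegral_smul_eq_zero_of_moments {X E : Type*} [TopologicalSpace X]
    [MeasurableSpace X] [OpensMeasurableSpace X] [T2Space X] [NormedAddCommGroup E]
    [NormedSpace ℝ E] {μ : Measure X} {K : Set X} (hK : IsCompact K) {k : X → E}
    (hk : IntegrableOn k K μ) {w φ : X → ℝ} (hw : ContinuousOn w K) (hw_inj : InjOn w K)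
    (hmoments : ∀ n : ℕ, ∫ x in K, w x ^ n • k x ∂μ = 0) (hφ : ContinuousOn φ K) :
    ∫ x in K, φ x • k x ∂μ = 0 := by
  have := isCompact_iff_compactSpace.1 hK
  have hKm := hK.measurableSet
  have hk' : Integrable (fun x : K => k x) (μ.comap (↑)) :=
    (integrableOn_iff_comap_subtypeVal hKm).1 hk
  rw [← integral_subtype_comap hKm fun x => φ x • k x]
  refine integral_smul_eq_zero_of_moments hk' (w := ⟨K.domRestrict w, hw.domRestrict⟩)
    hw_inj.injective (fun n => ?_) ⟨K.domRestrict φ, hφ.domRestrict⟩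
  rw [← hmoments n]
  exact integral_subtype_comap hKm fun x => w x ^ n • k x

section StieltjesTransform

variable {E : Type*} [NormedAddCommGroup E] [NormedSpace ℝ E]

/-- The generalized Stieltjes transform `α ↦ ∫ (α - t) ^ r • f t ∂μ(t)` of the density `f` with
respect to `μ`. It is meant for `α` to the right of the support of `f`; elsewhere `(α - t) ^ r`
is a junk value of `Real.rpow`. -/
noncomputable def stieltjesTransform (μ : Measure ℝ) (r : ℝ) (f : ℝ → E) (α : ℝ) : E :=
  ∫ t, (α - t) ^ r • f t ∂μ

variable {μ : Measure ℝ} {K : Set ℝ} {f : ℝ → E} {α r : ℝ}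

theorem continuousOn_sub_rpow (hα : ∀ t ∈ K, t < α) (r : ℝ) :
    ContinuousOn (fun t => (α - t) ^ r) K :=
  (continuousOn_const.sub continuousOn_id).rpow_const fun t ht =>
    Or.inl (sub_pos.2 (hα t ht)).ne'

theorem integrableOn_sub_rpow_smul (hK : IsCompact K) (hf : IntegrableOn f K μ)
    (hα : ∀ t ∈ K, t < α) (r : ℝ) : IntegrableOn (fun t => (α - t) ^ r • f t) K μ :=
  hf.continuousOn_smul (continuousOn_sub_rpow hα r) hK

theorem eventually_forall_mem_lt (hK : IsCompact K) (hα : ∀ t ∈ K, t < α) :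
    ∀ᶠ y in 𝓝 α, ∀ t ∈ K, t < y :=
  hK.eventually_forall_of_forall_eventually fun t ht =>
    continuous_snd.continuousAt.eventually_lt continuous_fst.continuousAt (hα t ht)

theorem exists_nhds_bound_sub_rpow (hK : IsCompact K) (hα : ∀ t ∈ K, t < α) (r : ℝ) :
    ∃ V ∈ 𝓝 α, (∀ y ∈ V, ∀ t ∈ K, t < y) ∧ ∃ C, ∀ y ∈ V, ∀ t ∈ K, ‖(y - t) ^ r‖ ≤ C := by
  obtain ⟨V, ⟨hV_nhds, hV_compact⟩, hV⟩ :=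
    (compact_basis_nhds α).mem_iff.1 (eventually_forall_mem_lt hK hα)
  have hcont : ContinuousOn (fun p : ℝ × ℝ => (p.1 - p.2) ^ r) (V ×ˢ K) :=
    (continuousOn_fst.sub continuousOn_snd).rpow_const fun p hp =>
      Or.inl (sub_pos.2 (hV hp.1 p.2 hp.2)).ne'
  obtain ⟨C, hC⟩ := (hV_compact.prod hK).exists_bound_of_continuousOn hcont
  exact ⟨V, hV_nhds, fun y hy => hV hy, C, fun y hy t ht => hC (y, t) ⟨hy, ht⟩⟩

theorem hasDerivAt_stieltjesTransform (hK : IsCompact K) (hf : IntegrableOn f K μ)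
    (hα : ∀ t ∈ K, t < α) (r : ℝ) :
    HasDerivAt (stieltjesTransform (μ.restrict K) r f)
      (r • stieltjesTransform (μ.restrict K) (r - 1) f α) α := by
  obtain ⟨V, hV, hlt, C, hC⟩ := exists_nhds_bound_sub_rpow hK hα (r - 1)
  have hmeas : ∀ᶠ y in 𝓝 α,
      AEStronglyMeasurable (fun t => (y - t) ^ r • f t) (μ.restrict K) := by
    filter_upwards [eventually_forall_mem_lt hK hα] with y hy
    exact (integrableOn_sub_rpow_smul hK hf hy r).aestronglyMeasurable
  have hbound : ∀ᵐ t ∂μ.restrict K, ∀ y ∈ V,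
      ‖r • (y - t) ^ (r - 1) • f t‖ ≤ |r| * (C * ‖f t‖) := by
    refine ae_restrict_of_forall_mem hK.measurableSet fun t ht y hy => ?_
    rw [norm_smul, norm_smul, Real.norm_eq_abs r]
    gcongr
    exact hC y hy t ht
  have hderiv : ∀ᵐ t ∂μ.restrict K, ∀ y ∈ V,
      HasDerivAt (fun y => (y - t) ^ r • f t) (r • (y - t) ^ (r - 1) • f t) y := by
    refine ae_restrict_of_forall_mem hK.measurableSet fun t ht y hy => ?_
    have hpow : HasDerivAt (fun y => (y - t) ^ r) (r * (y - t) ^ (r - 1)) y := by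
      simpa using ((hasDerivAt_id y).sub_const t).rpow_const (p := r)
        (Or.inl (sub_pos.2 (hlt y hy t ht)).ne')
    simpa only [smul_smul] using hpow.smul_const (f t)
  rw [stieltjesTransform, ← MeasureTheory.integral_smul]
  exact (_root_.hasDerivAt_integral_of_dominated_loc_of_deriv_le
    (F := fun y t => (y - t) ^ r • f t) hV hmeas
    (integrableOn_sub_rpow_smul hK hf hα r)
    ((integrableOn_sub_rpow_smul hK hf hα (r - 1)).smul r).aestronglyMeasurable
    hbound ((hf.norm.const_mul C).const_mul |r|) hderiv).2

theorem stieltjesTransform_sub_one_eventuallyEq_zero (hK : IsCompact K)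
    (hf : IntegrableOn f K μ) (hα : ∀ t ∈ K, t < α) (hr : r ≠ 0)
    (h : stieltjesTransform (μ.restrict K) r f =ᶠ[𝓝 α] 0) :
    stieltjesTransform (μ.restrict K) (r - 1) f =ᶠ[𝓝 α] 0 := by
  filter_upwards [h.eventuallyEq_nhds, eventually_forall_mem_lt hK hα] with y hy hKy
  have hderiv_zero : HasDerivAt (stieltjesTransform (μ.restrict K) r f) 0 y :=
    (hasDerivAt_const y 0).congr_of_eventuallyEq hy
  exact (smul_eq_zero.1
    ((hasDerivAt_stieltjesTransform hK hf hKy r).unique hderiv_zero)).resolve_left hr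

theorem stieltjesTransform_sub_natCast_eventuallyEq_zero (hK : IsCompact K)
    (hf : IntegrableOn f K μ) (hα : ∀ t ∈ K, t < α) (hr : ∀ n : ℕ, r ≠ n)
    (h : stieltjesTransform (μ.restrict K) r f =ᶠ[𝓝 α] 0) (n : ℕ) :
    stieltjesTransform (μ.restrict K) (r - n) f =ᶠ[𝓝 α] 0 := by
  induction n with
  | zero => simpa using h
  | succ n ih =>
    rw [Nat.cast_succ, ← sub_sub]
    exact stieltjesTransform_sub_one_eventuallyEq_zero hK hf hα (sub_ne_zero.2 (hr n)) ih

theorem setIntegral_smul_eq_zero_of_stieltjesTransform_eq_zero (hK : IsCompact K)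
    (hf : IntegrableOn f K μ) (hα : ∀ t ∈ K, t < α)
    (h : ∀ n : ℕ, stieltjesTransform (μ.restrict K) (r - n) f α = 0)
    {φ : ℝ → ℝ} (hφ : ContinuousOn φ K) : ∫ t in K, φ t • f t ∂μ = 0 := by
  have hpos : ∀ t ∈ K, 0 < α - t := fun t ht => sub_pos.2 (hα t ht)
  have hw : ContinuousOn (fun t => (α - t)⁻¹) K :=
    (continuousOn_const.sub continuousOn_id).inv₀ fun t ht => (hpos t ht).ne'
  have hw_inj : InjOn (fun t => (α - t)⁻¹) K := fun s _ t _ hst => by simpa using hst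
  have hmoments (n : ℕ) : ∫ t in K, (α - t)⁻¹ ^ n • (α - t) ^ r • f t ∂μ = 0 := by
    rw [← h n]
    refine setIntegral_congr_fun hK.measurableSet fun t ht => ?_
    simp only [smul_smul, rpow_sub_natCast (hpos t ht).ne', inv_pow, div_eq_inv_mul]
  have hweighted := setIntegral_smul_eq_zero_of_moments hK
    (integrableOn_sub_rpow_smul hK hf hα r) hw hw_inj hmoments
    (hφ.mul (continuousOn_sub_rpow hα (-r)))
  rw [← hweighted]
  refine setIntegral_congr_fun hK.measurableSet fun t ht => ?_
  simp only [Pi.mul_apply, smul_smul, mul_assoc, ← rpow_add (hpos t ht), neg_add_cancel,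
    rpow_zero, mul_one]

theorem ae_eq_zero_of_stieltjesTransform_eventuallyEq_zero [CompleteSpace E] (hK : IsCompact K)
    (hf : IntegrableOn f K μ) (hα : ∀ t ∈ K, t < α) (hr : ∀ n : ℕ, r ≠ n)
    (h : stieltjesTransform (μ.restrict K) r f =ᶠ[𝓝 α] 0) : f =ᵐ[μ.restrict K] 0 := by
  have hpowers (n : ℕ) : stieltjesTransform (μ.restrict K) (r - n) f α = 0 :=
    (stieltjesTransform_sub_natCast_eventuallyEq_zero hK hf hα hr h n).self_of_nhds
  exact ae_eq_zero_of_integral_contDiff_smul_eq_zero hf.locallyIntegrable fun φ hφ _ =>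
    setIntegral_smul_eq_zero_of_stieltjesTransform_eq_zero hK hf hα hpowers
      hφ.continuous.continuousOn

end StieltjesTransform

section CosSq

/-- The distribution of `cos² ϑ` under Lebesgue measure on `[0, π / 2]`, of total mass `π / 2`;
it turns the averages over the invariant curves into Stieltjes transforms on `[0, 1]`. -/
noncomputable def cosSqMeasure : Measure ℝ :=
  (volume.restrict (Icc 0 (π / 2))).map fun ϑ => cos ϑ ^ 2

instance : IsFiniteMeasure cosSqMeasure := by
  unfold cosSqMeasure
  infer_instance

theorem measurable_cos_sq : Measurable fun ϑ : ℝ => cos ϑ ^ 2 := by fun_prop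

theorem cos_sq_mem_Icc (ϑ : ℝ) : cos ϑ ^ 2 ∈ Icc (0 : ℝ) 1 :=
  ⟨sq_nonneg _, cos_sq_le_one ϑ⟩

theorem cosSqMeasure_restrict_Icc : cosSqMeasure.restrict (Icc 0 1) = cosSqMeasure :=
  Measure.restrict_eq_self_of_ae_mem <|
    (ae_map_iff measurable_cos_sq.aemeasurable measurableSet_Icc).2 (.of_forall cos_sq_mem_Icc)

theorem stieltjesTransform_cosSqMeasure {E : Type*} [NormedAddCommGroup E] [NormedSpace ℝ E]
    {P : ℝ → E} (hP : AEStronglyMeasurable P cosSqMeasure) (r α : ℝ) :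
    stieltjesTransform cosSqMeasure r P α =
      ∫ ϑ in (0 : ℝ)..(π / 2), (α - cos ϑ ^ 2) ^ r • P (cos ϑ ^ 2) := by
  have hkernel : Measurable fun t : ℝ => (α - t) ^ r := by fun_prop
  rw [integral_of_le pi_div_two_pos.le, ← integral_Icc_eq_integral_Ioc]
  exact integral_map measurable_cos_sq.aemeasurable (hkernel.aestronglyMeasurable.smul hP)

theorem surjOn_cos_sq : SurjOn (fun ϑ => cos ϑ ^ 2) (Icc 0 (π / 2)) (Icc 0 1) := by
  have hivt := intermediate_value_Icc' pi_div_two_pos.le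
    (f := fun ϑ => cos ϑ ^ 2) (by fun_prop)
  rwa [cos_pi_div_two, cos_zero, zero_pow two_ne_zero, one_pow] at hivt

theorem eqOn_of_ae_eq_cosSqMeasure {Y : Type*} [TopologicalSpace Y] [T2Space Y] {P Q : ℝ → Y}
    (hP : ContinuousOn P (Icc 0 1)) (hQ : ContinuousOn Q (Icc 0 1))
    (h : P =ᵐ[cosSqMeasure] Q) : EqOn P Q (Icc 0 1) := by
  have hae : (fun ϑ => P (cos ϑ ^ 2)) =ᵐ[volume.restrict (Icc 0 (π / 2))]
      fun ϑ => Q (cos ϑ ^ 2) :=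
    ae_of_ae_map measurable_cos_sq.aemeasurable h
  have hcos := Measure.eqOn_Icc_of_ae_eq volume pi_div_two_pos.ne hae
    (hP.comp_continuous (by fun_prop) cos_sq_mem_Icc).continuousOn
    (hQ.comp_continuous (by fun_prop) cos_sq_mem_Icc).continuousOn
  intro t ht
  obtain ⟨ϑ, hϑ, rfl⟩ := surjOn_cos_sq ht
  exact hcos hϑ

end CosSq

theorem outside_separatrix_rigidity_general {E : Type*} [NormedAddCommGroup E] [NormedSpace ℝ E]
    [CompleteSpace E] {α₀ r : ℝ} (hα₀ : 1 < α₀) (hr : ∀ n : ℕ, r ≠ n) {P : ℝ → E}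
    (hP : ContinuousOn P (Icc 0 1))
    (h : ∀ᶠ α in 𝓝 α₀,
      ∫ ϑ in (0 : ℝ)..(π / 2), (α - cos ϑ ^ 2) ^ r • P (cos ϑ ^ 2) = 0) :
    ∀ t ∈ Icc (0 : ℝ) 1, P t = 0 := by
  have hint : IntegrableOn P (Icc 0 1) cosSqMeasure := hP.integrableOn_compact isCompact_Icc
  have hmeas := hint.aestronglyMeasurable
  rw [cosSqMeasure_restrict_Icc] at hmeas
  have hstieltjes :
      stieltjesTransform (cosSqMeasure.restrict (Icc 0 1)) r P =ᶠ[𝓝 α₀] 0 := by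
    filter_upwards [h] with α hα
    rwa [cosSqMeasure_restrict_Icc, stieltjesTransform_cosSqMeasure hmeas]
  have hae := ae_eq_zero_of_stieltjesTransform_eventuallyEq_zero isCompact_Icc hint
    (fun t ht => ht.2.trans_lt hα₀) hr hstieltjes
  rw [cosSqMeasure_restrict_Icc] at hae
  exact eqOn_of_ae_eq_cosSqMeasure hP continuousOn_const hae

theorem integral_rpow_neg_half_smul_eq_integral_div_sqrt (P : ℝ → ℝ) {α : ℝ} (hα : 1 ≤ α) :
    ∫ ϑ in (0 : ℝ)..(π / 2), (α - cos ϑ ^ 2) ^ (-(1 / 2) : ℝ) • P (cos ϑ ^ 2) =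
      ∫ ϑ in (0 : ℝ)..(π / 2), P (cos ϑ ^ 2) / √(α - cos ϑ ^ 2) := by
  refine integral_congr fun ϑ _ => ?_
  have hnonneg : 0 ≤ α - cos ϑ ^ 2 := sub_nonneg.2 ((cos_sq_le_one ϑ).trans hα)
  simp only [rpow_neg hnonneg, sqrt_eq_rpow, smul_eq_mul, div_eq_inv_mul]

theorem neg_half_ne_natCast (n : ℕ) : (-(1 / 2) : ℝ) ≠ n :=
  ((by norm_num : (-(1 / 2) : ℝ) < 0).trans_le n.cast_nonneg).ne

/-- Vanishing of the Leray averages over all invariant curves outside the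
separatrix (for `1 < α ≤ β`) forces the symmetric variation to vanish. -/
theorem outside_separatrix_rigidity
    (β : ℝ) (hβ : 1 < β) (P : ℝ → ℝ) (hP : ContinuousOn P (Set.Icc 0 1))
    (h : ∀ α ∈ Set.Ioc (1 : ℝ) β,
      ∫ ϑ in (0:ℝ)..(π / 2),
        P (Real.cos ϑ ^ 2) / Real.sqrt (α - Real.cos ϑ ^ 2) = 0) :
    ∀ t ∈ Set.Icc (0 : ℝ) 1, P t = 0 := by
  obtain ⟨α₀, hα₀, hα₀β⟩ := exists_between hβ
  refine outside_separatrix_rigidity_general hα₀ neg_half_ne_natCast hP ?_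
  filter_upwards [Ioo_mem_nhds hα₀ hα₀β] with α hα using
    (integral_rpow_neg_half_smul_eq_integral_div_sqrt P hα.1.le).trans (h α ⟨hα.1, hα.2.le⟩)
end

section
/- Let a > b > 0, c = √(a² − b²), and β = a²/c². Let r : ℝ → ℝ be continuous, 2π-periodic, even (r(−ϑ) = r(ϑ) for all ϑ), and satisfying r(π − ϑ) = r(ϑ) for all ϑ. Suppose that for every α ∈ (1, β), ∫₀^{2π} r(ϑ) · (β − cos²ϑ)^{−1/2} · (α − cos²ϑ)^{−1/2} dϑ = 0. Then r(ϑ) = 0 for every ϑ. -/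
open Real MeasureTheory intervalIntegral

/-!
Differentiating `∫ g (α - x) ^ p` repeatedly at one parameter `α₀` yields the moments of
`y = (α₀ - x)⁻¹` against `g (α₀ - x) ^ p`; as long as `p ∉ ℕ` no constant factor vanishes, so if
the integral is zero near `α₀`, then so are all these moments. By Weierstrass' theorem `g` is then
orthogonal to every continuous function of `x`. For `x = cos² ϑ` and `g = r w` with a weight
`w > 0`, the symmetric function `r` is itself a continuous function of `x`, whence `∫ w r² = 0`.
-/

section ParametricIntegral

open Set Filter Topology

variable {X : Type*} [MeasurableSpace X] {μ : Measure X} {g x : X → ℝ} {A B p α₀ : ℝ}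

lemma integrable_mul_comp_of_continuousOn {K : Set ℝ} (hK : IsCompact K) (hg : Integrable g μ)
    (hx : AEMeasurable x μ) (hxK : ∀ᵐ t ∂μ, x t ∈ K) {f : ℝ → ℝ} (hf : ContinuousOn f K) :
    Integrable (fun t => g t * f (x t)) μ := by
  obtain ⟨C, hC⟩ := hK.exists_bound_of_continuousOn hf
  have hf_map : AEStronglyMeasurable f (μ.map x) := by
    rw [← Measure.restrict_eq_self_of_ae_mem ((ae_map_iff hx hK.measurableSet).2 hxK)]
    exact hf.aestronglyMeasurable hK.measurableSet
  exact hg.mul_bdd (hf_map.comp_aemeasurable hx) (hxK.mono fun t ht => hC _ ht)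

lemma continuousOn_sub_rpow_s8 {α : ℝ} (hα : B < α) (p : ℝ) :
    ContinuousOn (fun s => (α - s) ^ p) (Icc A B) :=
  ContinuousOn.rpow_const (by fun_prop) fun _ hs => Or.inl (sub_pos.2 (hs.2.trans_lt hα)).ne'

lemma hasDerivAt_integral_mul_sub_rpow (hg : Integrable g μ) (hx : AEMeasurable x μ)
    (hxAB : ∀ᵐ t ∂μ, x t ∈ Icc A B) (hα₀ : B < α₀) (p : ℝ) :
    HasDerivAt (fun α => ∫ t, g t * (α - x t) ^ p ∂μ)
      (p * ∫ t, g t * (α₀ - x t) ^ (p - 1) ∂μ) α₀ := by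
  have hint : ∀ α > B, ∀ q : ℝ, Integrable (fun t => g t * (α - x t) ^ q) μ := fun α hα q =>
    integrable_mul_comp_of_continuousOn isCompact_Icc hg hx hxAB (continuousOn_sub_rpow_s8 hα q)
  obtain ⟨d, hBd, hdα₀⟩ := exists_between hα₀
  obtain ⟨D, hα₀D⟩ := exists_gt α₀
  obtain ⟨C, hC⟩ : ∃ C, ∀ s ∈ Icc (d - B) (D - A), ‖s ^ (p - 1)‖ ≤ C :=
    isCompact_Icc.exists_bound_of_continuousOn <| continuousOn_id.rpow_const fun s hs =>
      Or.inl ((sub_pos.2 hBd).trans_le hs.1).ne'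
  rw [← MeasureTheory.integral_const_mul]
  refine (hasDerivAt_integral_of_dominated_loc_of_deriv_le
    (F' := fun α t => p * (g t * (α - x t) ^ (p - 1))) (bound := fun t => |p| * (|g t| * C))
    (Ioo_mem_nhds hdα₀ hα₀D) ?_ (hint α₀ hα₀ p)
    ((hint α₀ hα₀ (p - 1)).const_mul p).aestronglyMeasurable ?_
    ((hg.abs.mul_const C).const_mul |p|) ?_).2
  · filter_upwards [Ioi_mem_nhds hα₀] with α hα using (hint α hα p).aestronglyMeasurable
  · filter_upwards [hxAB] with t ht α hα
    rw [norm_mul, norm_mul, norm_eq_abs p, norm_eq_abs (g t)]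
    gcongr
    exact hC _ ⟨by linarith [hα.1, ht.2], by linarith [hα.2, ht.1]⟩
  · filter_upwards [hxAB] with t ht α hα
    have hne : α - x t ≠ 0 := (sub_pos.2 (ht.2.trans_lt (hBd.trans hα.1))).ne'
    exact ((((hasDerivAt_id' α).sub_const (x t)).rpow_const (Or.inl hne)).const_mul
      (g t)).congr_deriv (by ring)

lemma eventually_integral_mul_sub_rpow_sub_one_eq_zero (hg : Integrable g μ)
    (hx : AEMeasurable x μ) (hxAB : ∀ᵐ t ∂μ, x t ∈ Icc A B) (hα₀ : B < α₀) (hp : p ≠ 0)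
    (h : ∀ᶠ α in 𝓝 α₀, ∫ t, g t * (α - x t) ^ p ∂μ = 0) :
    ∀ᶠ α in 𝓝 α₀, ∫ t, g t * (α - x t) ^ (p - 1) ∂μ = 0 := by
  filter_upwards [h.eventually_nhds, Ioi_mem_nhds hα₀] with α hzero hα
  have hderiv_zero : HasDerivAt (fun α => ∫ t, g t * (α - x t) ^ p ∂μ) 0 α :=
    (hasDerivAt_const α (0 : ℝ)).congr_of_eventuallyEq hzero
  have hderiv := hasDerivAt_integral_mul_sub_rpow hg hx hxAB hα p
  exact (mul_eq_zero.1 (hderiv.unique hderiv_zero)).resolve_left hp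

lemma eventually_integral_mul_sub_rpow_sub_nat_eq_zero (hg : Integrable g μ)
    (hx : AEMeasurable x μ) (hxAB : ∀ᵐ t ∂μ, x t ∈ Icc A B) (hα₀ : B < α₀)
    (hp : ∀ n : ℕ, p ≠ n) (h : ∀ᶠ α in 𝓝 α₀, ∫ t, g t * (α - x t) ^ p ∂μ = 0) (n : ℕ) :
    ∀ᶠ α in 𝓝 α₀, ∫ t, g t * (α - x t) ^ (p - n) ∂μ = 0 := by
  induction n with
  | zero => simpa only [Nat.cast_zero, sub_zero] using h
  | succ n ih =>
    simpa only [Nat.cast_succ, sub_sub] using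
      eventually_integral_mul_sub_rpow_sub_one_eq_zero hg hx hxAB hα₀ (sub_ne_zero.2 (hp n)) ih

lemma integral_mul_polynomial_eval_eq_zero {y : X → ℝ} (hg : Integrable g μ)
    (hy : AEMeasurable y μ) (hyAB : ∀ᵐ t ∂μ, y t ∈ Icc A B)
    (h : ∀ n : ℕ, ∫ t, g t * y t ^ n ∂μ = 0) (P : Polynomial ℝ) :
    ∫ t, g t * P.eval (y t) ∂μ = 0 := by
  have hint : ∀ Q : Polynomial ℝ, Integrable (fun t => g t * Q.eval (y t)) μ := fun Q =>
    integrable_mul_comp_of_continuousOn isCompact_Icc hg hy hyAB Q.continuous.continuousOn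
  induction P using Polynomial.induction_on' with
  | add P Q hP hQ =>
    simp only [Polynomial.eval_add, mul_add, integral_add (hint P) (hint Q), hP, hQ, add_zero]
  | monomial n c =>
    simp only [Polynomial.eval_monomial, mul_left_comm _ c, MeasureTheory.integral_const_mul, h,
      mul_zero]

lemma integral_mul_comp_eq_zero_of_integral_mul_pow_eq_zero {y : X → ℝ} (hg : Integrable g μ)
    (hy : AEMeasurable y μ) (hyAB : ∀ᵐ t ∂μ, y t ∈ Icc A B)
    (h : ∀ n : ℕ, ∫ t, g t * y t ^ n ∂μ = 0) {f : ℝ → ℝ} (hf : ContinuousOn f (Icc A B)) :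
    ∫ t, g t * f (y t) ∂μ = 0 := by
  have hint : ∀ {F : ℝ → ℝ}, ContinuousOn F (Icc A B) → Integrable (fun t => g t * F (y t)) μ :=
    integrable_mul_comp_of_continuousOn isCompact_Icc hg hy hyAB
  have hle : ∀ ε > 0, |∫ t, g t * f (y t) ∂μ| ≤ ε * ∫ t, |g t| ∂μ := by
    intro ε hε
    obtain ⟨P, hP⟩ := exists_polynomial_near_of_continuousOn A B f hf ε hε
    have hsub : ∫ t, g t * f (y t) ∂μ = ∫ t, g t * (f (y t) - P.eval (y t)) ∂μ := by
      simp only [mul_sub]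
      rw [integral_sub (hint hf) (hint P.continuous.continuousOn),
        integral_mul_polynomial_eval_eq_zero hg hy hyAB h, sub_zero]
    rw [hsub, ← MeasureTheory.integral_const_mul, ← norm_eq_abs]
    refine norm_integral_le_of_norm_le (hg.abs.const_mul ε) (hyAB.mono fun t ht => ?_)
    rw [norm_mul, mul_comm, norm_eq_abs, norm_eq_abs, abs_sub_comm]
    gcongr
    exact (hP _ ht).le
  have hlim : Tendsto (fun ε : ℝ => ε * ∫ t, |g t| ∂μ) (𝓝[>] 0) (𝓝 0) := by
    simpa only [id_eq, zero_mul] using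
      ((continuous_id.mul_const (∫ t, |g t| ∂μ)).tendsto 0).mono_left nhdsWithin_le_nhds
  exact abs_nonpos_iff.1 (ge_of_tendsto hlim (eventually_mem_nhdsWithin.mono hle))

theorem integral_mul_comp_eq_zero_of_integral_mul_sub_rpow_eq_zero (hg : Integrable g μ)
    (hx : AEMeasurable x μ) (hAB : A ≤ B) (hxAB : ∀ᵐ t ∂μ, x t ∈ Icc A B) (hα₀ : B < α₀)
    (hp : ∀ n : ℕ, p ≠ n) (h : ∀ᶠ α in 𝓝 α₀, ∫ t, g t * (α - x t) ^ p ∂μ = 0)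
    {f : ℝ → ℝ} (hf : ContinuousOn f (Icc A B)) :
    ∫ t, g t * f (x t) ∂μ = 0 := by
  have hpos : ∀ s ∈ Icc A B, 0 < α₀ - s := fun s hs => sub_pos.2 (hs.2.trans_lt hα₀)
  have hinv_pos : ∀ s ∈ Icc (α₀ - A)⁻¹ (α₀ - B)⁻¹, 0 < s := fun s hs =>
    (inv_pos.2 (hpos A (left_mem_Icc.2 hAB))).trans_le hs.1
  have hmoment : ∀ n : ℕ, ∫ t, g t * (α₀ - x t) ^ p * (α₀ - x t)⁻¹ ^ n ∂μ = 0 := fun n => by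
    refine Eq.trans (integral_congr_ae (hxAB.mono fun t ht => ?_))
      (eventually_integral_mul_sub_rpow_sub_nat_eq_zero hg hx hxAB hα₀ hp h n).self_of_nhds
    simp only [rpow_sub_natCast (hpos _ ht).ne', inv_pow, div_eq_mul_inv, mul_assoc]
  -- `f x` as a function of `s = (α₀ - x)⁻¹`; the factor `s ^ p` undoes the weight `(α₀ - x) ^ p`.
  have hF : ContinuousOn (fun s => f (α₀ - s⁻¹) * s ^ p) (Icc (α₀ - A)⁻¹ (α₀ - B)⁻¹) := by
    have hne : ∀ s ∈ Icc (α₀ - A)⁻¹ (α₀ - B)⁻¹, s ≠ 0 := fun s hs => (hinv_pos s hs).ne'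
    refine (hf.comp (continuousOn_const.sub (continuousOn_id.inv₀ hne)) fun s hs => ?_).mul
      (continuousOn_id.rpow_const fun s hs => Or.inl (hne s hs))
    have hA := inv_le_of_inv_le₀ (hpos A (left_mem_Icc.2 hAB)) hs.1
    have hB := le_inv_of_le_inv₀ (hinv_pos s hs) hs.2
    exact ⟨le_sub_comm.1 hA, sub_le_comm.1 hB⟩
  rw [← integral_mul_comp_eq_zero_of_integral_mul_pow_eq_zero (y := fun t => (α₀ - x t)⁻¹)
    (integrable_mul_comp_of_continuousOn isCompact_Icc hg hx hxAB (continuousOn_sub_rpow_s8 hα₀ p))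
    (hx.const_sub α₀).inv (hxAB.mono fun t ht =>
      ⟨inv_anti₀ (hpos _ ht) (by linarith [ht.1]),
        inv_anti₀ (sub_pos.2 hα₀) (by linarith [ht.2])⟩) hmoment hF]
  refine integral_congr_ae (hxAB.mono fun t ht => ?_)
  have hcancel : (α₀ - x t) ^ p * (α₀ - x t)⁻¹ ^ p = 1 := by
    rw [← mul_rpow (hpos _ ht).le (inv_pos.2 (hpos _ ht)).le, mul_inv_cancel₀ (hpos _ ht).ne',
      one_rpow]
  simp only [inv_inv, sub_sub_cancel]
  linear_combination -(g t * f (x t)) * hcancel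

end ParametricIntegral

section BoundaryVariation

open Set Filter Topology

lemma eqOn_zero_of_integral_mul_sq_eq_zero {u v : ℝ} (huv : u < v) {r w : ℝ → ℝ}
    (hr : ContinuousOn r (Icc u v)) (hw : IntervalIntegrable w volume u v)
    (hw_pos : ∀ᵐ t ∂volume.restrict (Ioc u v), 0 < w t)
    (h : ∫ t in u..v, w t * r t ^ 2 = 0) : EqOn r 0 (Icc u v) := by
  have hint : IntervalIntegrable (fun t => w t * r t ^ 2) volume u v :=
    hw.mul_continuousOn (by rw [uIcc_of_le huv.le]; exact hr.pow 2)
  have hzero : (fun t => w t * r t ^ 2) =ᵐ[volume.restrict (Ioc u v)] 0 :=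
    (integral_eq_zero_iff_of_le_of_nonneg_ae huv.le
      (hw_pos.mono fun t ht => mul_nonneg ht.le (sq_nonneg _)) hint).1 h
  refine Measure.eqOn_Icc_of_ae_eq volume huv.ne ?_ hr continuousOn_const
  rw [← restrict_Ioc_eq_restrict_Icc]
  filter_upwards [hzero, hw_pos] with t ht hwt
  exact (pow_eq_zero_iff two_ne_zero).1 ((mul_eq_zero.1 ht).resolve_left hwt.ne')

variable {r : ℝ → ℝ}

lemma periodic_pi_of_even_of_pi_sub (heven : Function.Even r) (hsym : ∀ ϑ, r (π - ϑ) = r ϑ) :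
    Function.Periodic r π := fun ϑ => by
  rw [← heven ϑ, ← hsym (-ϑ), sub_neg_eq_add, add_comm]

lemma eq_of_cos_sq_eq_cos_sq (heven : Function.Even r) (hper : Function.Periodic r π) {s t : ℝ}
    (h : cos s ^ 2 = cos t ^ 2) : r s = r t := by
  have hcos : cos (2 * s) = cos (2 * t) := by rw [cos_two_mul, cos_two_mul, h]
  obtain ⟨k, hk | hk⟩ := cos_eq_cos_iff.1 hcos
  · rw [show t = s + k * π by linarith, hper.int_mul k s]
  · rw [show t = -s + k * π by linarith, hper.int_mul k (-s), heven]

lemma exists_continuous_eq_comp_cos_sq (hr : Continuous r) (heven : Function.Even r)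
    (hper : Function.Periodic r π) : ∃ f : ℝ → ℝ, Continuous f ∧ ∀ ϑ, r ϑ = f (cos ϑ ^ 2) := by
  refine ⟨fun s => r (arccos √s), hr.comp (continuous_arccos.comp continuous_sqrt), fun ϑ => ?_⟩
  refine eq_of_cos_sq_eq_cos_sq heven hper ?_
  rw [sqrt_sq_eq_abs, cos_arccos (by linarith [abs_nonneg (cos ϑ)]) (abs_cos_le_one ϑ), sq_abs]

lemma sub_cos_sq_pos {β : ℝ} (hβ : 1 < β) (ϑ : ℝ) : 0 < β - cos ϑ ^ 2 :=
  sub_pos.2 ((cos_sq_le_one ϑ).trans_lt hβ)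

lemma continuous_sub_cos_sq_rpow {β : ℝ} (hβ : 1 < β) (p : ℝ) :
    Continuous fun ϑ => (β - cos ϑ ^ 2) ^ p :=
  Continuous.rpow_const (by fun_prop) fun ϑ => Or.inl (sub_cos_sq_pos hβ ϑ).ne'

lemma one_lt_sq_div_sqrt_sub_sq {a b : ℝ} (hab : b < a) (hb : 0 < b) :
    1 < a ^ 2 / √(a ^ 2 - b ^ 2) ^ 2 := by
  have hpos : 0 < a ^ 2 - b ^ 2 := sub_pos.2 (pow_lt_pow_left₀ hab hb.le two_ne_zero)
  rw [sq_sqrt hpos.le, one_lt_div hpos]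
  linarith [pow_pos hb 2]

theorem rigidity_outside_separatrix_general {w : ℝ → ℝ} {p α₀ : ℝ} (hr : Continuous r)
    (heven : ∀ ϑ, r (-ϑ) = r ϑ) (hsym : ∀ ϑ, r (π - ϑ) = r ϑ)
    (hw : IntervalIntegrable w volume 0 (2 * π))
    (hw_pos : ∀ᵐ ϑ ∂volume.restrict (Ioc 0 (2 * π)), 0 < w ϑ)
    (hp : ∀ n : ℕ, p ≠ n) (hα₀ : 1 < α₀)
    (h : ∀ᶠ α in 𝓝 α₀, ∫ ϑ in (0 : ℝ)..(2 * π), r ϑ * w ϑ * (α - cos ϑ ^ 2) ^ p = 0) (ϑ : ℝ) :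
    r ϑ = 0 := by
  have hper := periodic_pi_of_even_of_pi_sub heven hsym
  obtain ⟨f, hf, hrf⟩ := exists_continuous_eq_comp_cos_sq hr heven hper
  have horth : ∫ ϑ in (0 : ℝ)..(2 * π), r ϑ * w ϑ * f (cos ϑ ^ 2) = 0 := by
    simp only [integral_of_le two_pi_pos.le] at h ⊢
    exact integral_mul_comp_eq_zero_of_integral_mul_sub_rpow_eq_zero
      (hw.continuousOn_mul hr.continuousOn).1 (by fun_prop) zero_le_one
      (.of_forall fun t => ⟨sq_nonneg _, cos_sq_le_one t⟩) hα₀ hp h hf.continuousOn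
  have hsq : ∫ ϑ in (0 : ℝ)..(2 * π), w ϑ * r ϑ ^ 2 = 0 := by
    refine Eq.trans (intervalIntegral.integral_congr fun t _ => ?_) horth
    simp only [← hrf]
    ring
  obtain ⟨t, ht, hrt⟩ := hper.exists_mem_Ico₀ pi_pos ϑ
  rw [hrt]
  exact eqOn_zero_of_integral_mul_sq_eq_zero two_pi_pos hr.continuousOn hw hw_pos hsq
    ⟨ht.1, by linarith [ht.2, pi_pos]⟩

end BoundaryVariation

/-- Infinitesimal spectral rigidity of the ellipse using invariant curves outside
the separatrix: if all the weighted Leray averages of a `ℤ₂ × ℤ₂`-symmetric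
boundary variation `r` over the invariant curves `{I = α}`, `1 < α < β`, vanish,
then `r = 0`. -/
theorem rigidity_outside_separatrix
    (a b c β : ℝ) (hab : b < a) (hb : 0 < b)
    (hc : c = Real.sqrt (a ^ 2 - b ^ 2)) (hβ : β = a ^ 2 / c ^ 2)
    (r : ℝ → ℝ) (hr : Continuous r)
    (hper : Function.Periodic r (2 * π))
    (heven : ∀ ϑ : ℝ, r (-ϑ) = r ϑ)
    (hsym : ∀ ϑ : ℝ, r (π - ϑ) = r ϑ)
    (h : ∀ α ∈ Set.Ioo (1 : ℝ) β,
      ∫ ϑ in (0:ℝ)..(2 * π),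
        r ϑ * (β - Real.cos ϑ ^ 2) ^ (-(1/2 : ℝ)) *
          (α - Real.cos ϑ ^ 2) ^ (-(1/2 : ℝ)) = 0) :
    ∀ ϑ : ℝ, r ϑ = 0 := by
  have hβ_one : 1 < β := by rw [hβ, hc]; exact one_lt_sq_div_sqrt_sub_sq hab hb
  obtain ⟨α₀, hα₀⟩ := exists_between hβ_one
  exact rigidity_outside_separatrix_general hr heven hsym
    ((continuous_sub_cos_sq_rpow hβ_one _).intervalIntegrable _ _)
    (.of_forall fun ϑ => rpow_pos_of_pos (sub_cos_sq_pos hβ_one ϑ) _)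
    (fun n => ((neg_lt_zero.2 one_half_pos).trans_le n.cast_nonneg).ne) hα₀.1
    (Filter.eventually_of_mem (Ioo_mem_nhds hα₀.1 hα₀.2) h)
end

section
/- Let a > b > 0 and c = √(a² − b²). Let q = (x, y) ∈ ℝ² be a point on the ellipse x²/a² + y²/b² = 1, and let n ∈ ℝ² be a unit vector parallel to the normal direction (x/a², y/b²) at q. For p = (p₁, p₂) ∈ ℝ², let p' = p − 2⟨p, n⟩·n be the reflection of p at q. Define the angular momenta about the two foci by L₁(p) = (x − c)·p₂ − y·p₁ and L₂(p) = (x + c)·p₂ − y·p₁. Then L₁(p)·L₂(p) = L₁(p')·L₂(p'). -/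
open Real

/-! Write `Q p = L₁ p * L₂ p = (x p₂ - y p₁)² - c² p₂²`. Reflection changes the sign of the normal
component of `p` and keeps the tangential one, so it preserves every quadratic form for which the
normal and tangential directions are orthogonal. For `Q` they are: if `n` is normal to the ellipse
at `(x, y)`, then the polar form of `Q` satisfies `B(v, n) = -2 (c y / b)² ⟨v, n⟩` for all `v`. -/

theorem quadraticMap_map_sub_two_mul_smul_of_isOrtho {R M N : Type*} [CommRing R] [AddCommGroup M]
    [AddCommGroup N] [Module R M] [Module R N] (Q : QuadraticMap R M N) {φ : Module.Dual R M}
    {u : M} (hu : φ u = 1) (hortho : ∀ v, φ v = 0 → Q.IsOrtho v u) (p : M) :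
    Q (p - (2 * φ p) • u) = Q p := by
  let v := p - φ p • u
  have hvu : Q.IsOrtho v u := hortho v (by simp [v, hu])
  have hortho_smul (r : R) : Q (v + r • u) = Q v + Q (r • u) := by
    rw [QuadraticMap.map_add Q, QuadraticMap.polar_smul_right, hvu.polar_eq_zero, smul_zero,
      add_zero]
  calc
    Q (p - (2 * φ p) • u) = Q (v + (-φ p) • u) := by congr 1; module
    _ = Q v + Q (φ p • u) := by rw [hortho_smul, neg_smul, QuadraticMap.map_neg]
    _ = Q p := by rw [← hortho_smul, sub_add_cancel]

theorem polar_linMulLin {R M A : Type*} [CommRing R] [AddCommGroup M] [Module R M]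
    [NonUnitalNonAssocRing A] [Module R A] [SMulCommClass R A A] [IsScalarTower R A A]
    (f g : M →ₗ[R] A) (v w : M) :
    QuadraticMap.polar (QuadraticMap.linMulLin f g) v w = f v * g w + f w * g v := by
  simp only [QuadraticMap.polar, QuadraticMap.linMulLin_apply, map_add, add_mul, mul_add]
  abel

section CommRing

variable {R : Type*} [CommRing R]

/-- The angular momentum `r × p`, as a linear form in the momentum `p`; the argument `r` is the
displacement from the reference point to the particle. -/
def angularMomentum (r : R × R) : Module.Dual R (R × R) :=
  r.1 • LinearMap.snd R R R - r.2 • LinearMap.fst R R R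

theorem angularMomentum_apply (r p : R × R) :
    angularMomentum r p = r.1 * p.2 - r.2 * p.1 :=
  rfl

/-- The quadratic form `L₁L₂` in the momentum of a particle at `q`, where `L₁` and `L₂` are the
angular momenta about the points `(c, 0)` and `(-c, 0)`. -/
def focalForm (c : R) (q : R × R) : QuadraticForm R (R × R) :=
  QuadraticMap.linMulLin (angularMomentum (q.1 - c, q.2)) (angularMomentum (q.1 + c, q.2))

end CommRing

section Field

variable {K : Type*} [Field K]

theorem polar_focalForm_ellipse_normal {a b c x y : K} (ha : a ≠ 0) (hb : b ≠ 0)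
    (hc : c ^ 2 = a ^ 2 - b ^ 2) (hq : x ^ 2 / a ^ 2 + y ^ 2 / b ^ 2 = 1) {t : K} {n : K × K}
    (hn : n = t • (x / a ^ 2, y / b ^ 2)) (v : K × K) :
    QuadraticMap.polar (focalForm c (x, y)) v n =
      -2 * (c * y / b) ^ 2 * (v.1 * n.1 + v.2 * n.2) := by
  have normal_slope : x / a ^ 2 * n.2 = y / b ^ 2 * n.1 := by
    simp only [hn, Prod.smul_mk, smul_eq_mul]
    ring
  have normal_moment : x * n.2 - y * n.1 = c ^ 2 * (x / a ^ 2 * n.2) := by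
    simp only [hn, hc, Prod.smul_mk, smul_eq_mul]
    field_simp
  calc
    QuadraticMap.polar (focalForm c (x, y)) v n
        = 2 * ((x * v.2 - y * v.1) * (x * n.2 - y * n.1) - c ^ 2 * v.2 * n.2) := by
      rw [focalForm, polar_linMulLin]
      simp only [angularMomentum_apply]
      ring
    _ = 2 * c ^ 2 * ((x * v.2 - y * v.1) * (x / a ^ 2 * n.2)
          - (x ^ 2 / a ^ 2 + y ^ 2 / b ^ 2) * (v.2 * n.2)) := by
      rw [normal_moment, hq]
      ring
    _ = -2 * c ^ 2 * y * (v.1 * (x / a ^ 2 * n.2) + v.2 * (y / b ^ 2 * n.2)) := by ring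
    _ = -2 * (c * y / b) ^ 2 * (v.1 * n.1 + v.2 * n.2) := by
      rw [normal_slope]
      ring

theorem product_angular_momenta_reflection_invariant_general {a b c : K} (ha : a ≠ 0)
    (hb : b ≠ 0) (hc : c ^ 2 = a ^ 2 - b ^ 2) {x y : K}
    (hq : x ^ 2 / a ^ 2 + y ^ 2 / b ^ 2 = 1) {n : K × K} (hn : n.1 ^ 2 + n.2 ^ 2 = 1)
    (hpar : ∃ t : K, n = t • (x / a ^ 2, y / b ^ 2)) (p : K × K) :
    focalForm c (x, y) p =
      focalForm c (x, y) (p - (2 * (p.1 * n.1 + p.2 * n.2)) • n) := by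
  obtain ⟨t, ht⟩ := hpar
  let φ : Module.Dual K (K × K) := n.1 • LinearMap.fst K K K + n.2 • LinearMap.snd K K K
  have hφ (v : K × K) : φ v = v.1 * n.1 + v.2 * n.2 := by simp [φ, mul_comm]
  have hunit : φ n = 1 := by rw [hφ, ← hn]; ring
  rw [← hφ]
  refine (quadraticMap_map_sub_two_mul_smul_of_isOrtho _ hunit (fun v hv ↦ ?_) p).symm
  refine QuadraticMap.isOrtho_polarBilin.mp ?_
  rw [QuadraticMap.polarBilin_apply_apply, polar_focalForm_ellipse_normal ha hb hc hq ht, ← hφ, hv,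
    mul_zero]

end Field

/-- Complete integrability of elliptic billiards: the product `L₁L₂` of the
angular momenta about the two foci is invariant under reflection of the
momentum at the boundary of the ellipse. -/
theorem product_angular_momenta_reflection_invariant
    (a b c : ℝ) (hab : b < a) (hb : 0 < b) (hc : c = Real.sqrt (a ^ 2 - b ^ 2))
    (x y : ℝ) (hq : x ^ 2 / a ^ 2 + y ^ 2 / b ^ 2 = 1)
    (n : ℝ × ℝ) (hn : n.1 ^ 2 + n.2 ^ 2 = 1)
    (hpar : ∃ t : ℝ, n = (t * (x / a ^ 2), t * (y / b ^ 2)))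
    (p : ℝ × ℝ) :
    let p' : ℝ × ℝ := (p.1 - 2 * (p.1 * n.1 + p.2 * n.2) * n.1,
                       p.2 - 2 * (p.1 * n.1 + p.2 * n.2) * n.2)
    let L₁ : ℝ × ℝ → ℝ := fun q => (x - c) * q.2 - y * q.1
    let L₂ : ℝ × ℝ → ℝ := fun q => (x + c) * q.2 - y * q.1
    L₁ p * L₂ p = L₁ p' * L₂ p' := by
  have hc2 : c ^ 2 = a ^ 2 - b ^ 2 := by rw [hc, Real.sq_sqrt (by nlinarith)]
  exact product_angular_momenta_reflection_invariant_general (hb.trans hab).ne' hb.ne' hc2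
    hq hn hpar p
end
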